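/- arXiv:1809.07982 — 3 statements merged into one kernel-verified Lean document; each statement's English description precedes it below -/
import Mathlib

section
/- Let p ≡ 5 (mod 8) be a prime, t, b positive integers with t² + 4 = b²p, and 𝓕, 𝓛 the associated Lucas sequences. Fix an odd integer m₀, a positive even integer N, and an odd integer n₀. Then the set of squarefree parts s(D_{m₀,n}) of the integers D_{m₀,n} = 𝓛_{m₀}(2𝓕_{m₀} − 𝓕_n𝓛_{m₀})b, as n ranges over all integers with n ≡ n₀ (mod N) and n > 3, is infinite. (Here s(a) denotes the unique squarefree integer such that a = s(a)·A² for some positive integer A.) -/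
/-!
For even `k`, the addition formulas of Lucas sequences turn the product of the factors
`2𝓕(m) - 𝓕(n ± k)𝓛(m)` of `D_{m,n ± k}` into `X ^ 2 - K`, where `X = 𝓕(m)𝓛(k) - 𝓕(n)𝓛(m)`, and
`K = 𝓕(k) ^ 2 ((t ^ 2 + 4)𝓕(m) ^ 2 + (-1) ^ n 𝓛(m) ^ 2)` is nonzero and depends on `n` only through
its parity. A nonzero integer is a difference of two squares in only finitely many ways, and `𝓕` is
injective on `n ≥ 2`. So along an arithmetic progression two values of `D` at a given distance have
a nonsquare product as soon as they are far enough out. If there were only `r` squarefree parts,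
two of any `r + 1` consecutive values would share theirs, and their product would be a square.
-/

open Filter

theorem exists_squarefree_mul_sq {a : ℤ} (ha : a ≠ 0) :
    ∃ d A : ℤ, Squarefree d ∧ 0 < A ∧ a = d * A ^ 2 := by
  obtain ⟨s, A, -, hA, h, hs⟩ := Nat.sq_mul_squarefree_of_pos (Int.natAbs_pos.2 ha)
  refine ⟨a.sign * s, A, ?_, by exact_mod_cast hA, ?_⟩
  · rwa [← Int.squarefree_natAbs, Int.natAbs_mul, Int.natAbs_sign_of_ne_zero ha, one_mul,
      Int.natAbs_natCast]
  · calc a = a.sign * (A ^ 2 * s : ℕ) := by rw [h, Int.sign_mul_natAbs]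
      _ = a.sign * s * A ^ 2 := by push_cast; ring

theorem infinite_squarefree_parts_of_eventually_not_isSquare {a : ℕ → ℤ}
    (h : ∀ k > 0, ∀ᶠ n in atTop, ¬IsSquare (a n * a (n + k))) :
    {d : ℤ | Squarefree d ∧ ∃ n, ∃ A : ℤ, 0 < A ∧ a n = d * A ^ 2}.Infinite := by
  intro hfin
  set r := hfin.toFinset.card
  obtain ⟨n, hn⟩ := eventually_atTop.1 <|
    (eventually_all_finset (Finset.Icc 1 (r + 1))).2 fun k hk ↦ h k (Finset.mem_Icc.1 hk).1
  have ha (i : ℕ) : a (n + i) ≠ 0 := fun h0 ↦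
    hn (n + i) (by omega) 1 (by simp) (by rw [h0, zero_mul]; exact IsSquare.zero)
  choose d A hd hA hdA using fun i ↦ exists_squarefree_mul_sq (ha i)
  obtain ⟨i, hi, j, hj, hij, hdij⟩ := Finset.exists_ne_map_eq_of_card_lt_of_maps_to
    (s := Finset.range (r + 1)) (t := hfin.toFinset) (f := d) (by simp [r])
    (fun i _ ↦ by simpa using ⟨hd i, n + i, A i, hA i, hdA i⟩)
  wlog hlt : i < j generalizing i j
  · exact this j hj i hi hij.symm hdij.symm (by omega)
  rw [Finset.mem_range] at hj
  refine hn (n + i) (by omega) (j - i) (Finset.mem_Icc.2 (by omega)) ⟨d i * A i * A j, ?_⟩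
  rw [show n + i + (j - i) = n + j by omega, hdA i, hdA j, hdij]
  ring

theorem finite_setOf_isSquare_sq_sub {K : ℤ} (hK : K ≠ 0) :
    {x : ℤ | IsSquare (x ^ 2 - K)}.Finite := by
  refine (Set.finite_Icc (-|K|) |K|).subset ?_
  rintro x ⟨y, hy⟩
  have hle {z : ℤ} (hz : z ∣ K) : |z| ≤ |K| :=
    Int.le_of_dvd (abs_pos.2 hK) ((abs_dvd_abs z K).2 hz)
  have hsub := abs_le.1 (hle ⟨x + y, by linear_combination -hy⟩ : |x - y| ≤ |K|)
  have hadd := abs_le.1 (hle ⟨x - y, by linear_combination -hy⟩ : |x + y| ≤ |K|)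
  constructor <;> linarith

/-- `u` is the two-sided sequence with `u 0 = x`, `u 1 = y` and `u (k + 2) = t * u (k + 1) + u k`.
The Lucas sequence `𝓕` has initial values `0, 1`, and its companion `𝓛` has `2, t`. -/
structure IsLucasSeq {R : Type*} [CommRing R] (t x y : R) (u : ℤ → R) : Prop where
  zero : u 0 = x
  one : u 1 = y
  add_two : ∀ k, u (k + 2) = t * u (k + 1) + u k

namespace IsLucasSeq

section CommRing

variable {R : Type*} [CommRing R] {t x y : R} {u v F L : ℤ → R}

theorem apply_add_one (hu : IsLucasSeq t x y u) (k : ℤ) : u (k + 1) = t * u k + u (k - 1) := by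
  have h := hu.add_two (k - 1)
  rwa [sub_add_cancel, show k - 1 + 2 = k + 1 by ring] at h

theorem unique (hu : IsLucasSeq t x y u) (hv : IsLucasSeq t x y v) : u = v := by
  have h (k : ℤ) : u k = v k ∧ u (k + 1) = v (k + 1) := by
    induction k using Int.induction_on with
    | zero => simp [hu.zero, hu.one, hv.zero, hv.one]
    | succ k ih =>
      refine ⟨ih.2, ?_⟩
      rw [hu.apply_add_one, hv.apply_add_one, add_sub_cancel_right, ih.1, ih.2]
    | pred k ih =>
      rw [sub_add_cancel]
      refine ⟨?_, ih.1⟩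
      linear_combination hv.apply_add_one (-k) - hu.apply_add_one (-k) + ih.2 - t * ih.1
  exact funext fun k ↦ (h k).1

theorem apply_neg_one (hF : IsLucasSeq t 0 1 F) : F (-1) = 1 := by
  have h := hF.apply_add_one 0
  rw [zero_add, zero_sub, hF.one, hF.zero, mul_zero, zero_add] at h
  exact h.symm

theorem apply_add (hu : IsLucasSeq t x y u) (hF : IsLucasSeq t 0 1 F) (n k : ℤ) :
    u (n + k) = u (n + 1) * F k + u n * F (k - 1) := by
  have hleft : IsLucasSeq t (u n) (u (n + 1)) (fun k ↦ u (n + k)) :=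
    { zero := by simp
      one := rfl
      add_two := fun k ↦ by simpa only [add_assoc] using hu.add_two (n + k) }
  have hright : IsLucasSeq t (u n) (u (n + 1)) (fun k ↦ u (n + 1) * F k + u n * F (k - 1)) :=
    { zero := by simp [hF.zero, hF.apply_neg_one]
      one := by simp [hF.zero, hF.one]
      add_two := fun k ↦ by
        rw [hF.add_two, show k + 2 - 1 = k + 1 by ring, add_sub_cancel_right]
        linear_combination u n * hF.apply_add_one k }
  exact congrFun (hleft.unique hright) k

theorem apply_neg (hF : IsLucasSeq t 0 1 F) (k : ℤ) : F (-k) = -((-1 : Rˣ) ^ k : Rˣ) * F k := by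
  have hreflect : IsLucasSeq t 0 1 (fun k ↦ -((-1 : Rˣ) ^ k : Rˣ) * F (-k)) :=
    { zero := by simp [hF.zero]
      one := by simp [hF.apply_neg_one]
      add_two := fun k ↦ by
        have h := hF.apply_add_one (-(k + 1))
        rw [show -(k + 1) + 1 = -k by ring, show -(k + 1) - 1 = -(k + 2) by ring] at h
        simp only [zpow_add, zpow_one, zpow_two, mul_one, mul_neg, neg_neg, Units.val_neg, h]
        ring }
  have h := congrFun (hreflect.unique hF) (-k)
  rw [neg_neg, ← inv_zpow', inv_neg_one] at h
  exact h.symm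

theorem apply_add_one_mul_apply_sub_one (hF : IsLucasSeq t 0 1 F) (n : ℤ) :
    F (n + 1) * F (n - 1) = F n ^ 2 + ((-1 : Rˣ) ^ n : Rˣ) := by
  have h := hF.apply_add hF n (1 - n)
  have hneg := hF.apply_neg (n - 1)
  rw [neg_sub, zpow_sub_one] at hneg
  rw [add_sub_cancel, hF.one, sub_sub_cancel_left, hneg, hF.apply_neg] at h
  have hsq : (((-1 : Rˣ) ^ n : Rˣ) : R) ^ 2 = 1 := by
    rw [sq, ← Units.val_mul, ← mul_zpow, neg_mul_neg, one_mul, one_zpow, Units.val_one]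
  simp only [inv_neg_one, mul_neg, mul_one, Units.val_neg, neg_neg] at h
  linear_combination -(((-1 : Rˣ) ^ n : Rˣ) : R) * h +
    (F n ^ 2 - F (n + 1) * F (n - 1)) * hsq

theorem apply_sub_of_even (hu : IsLucasSeq t x y u) (hF : IsLucasSeq t 0 1 F) (n : ℤ) {k : ℤ}
    (hk : Even k) : u (n - k) = u n * F (k + 1) - u (n + 1) * F k := by
  have h := hu.apply_add hF n (-k)
  rw [← neg_add', hF.apply_neg, hF.apply_neg, zpow_add_one, hk.neg_one_zpow] at h
  rw [sub_eq_add_neg, h]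
  simp only [one_mul, Units.val_neg, Units.val_one]
  ring

theorem companion_eq (hF : IsLucasSeq t 0 1 F) (hL : IsLucasSeq t 2 t L) (n : ℤ) :
    L n = F (n + 1) + F (n - 1) := by
  have h := hL.apply_add hF 0 n
  rw [zero_add, zero_add, hL.one, hL.zero] at h
  linear_combination h - hF.apply_add_one n

theorem companion_sq (hF : IsLucasSeq t 0 1 F) (hL : IsLucasSeq t 2 t L) (n : ℤ) :
    L n ^ 2 = (t ^ 2 + 4) * F n ^ 2 + 4 * ((-1 : Rˣ) ^ n : Rˣ) := by
  rw [hF.companion_eq hL]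
  linear_combination 4 * hF.apply_add_one_mul_apply_sub_one n +
    (F (n + 1) - F (n - 1) + t * F n) * hF.apply_add_one n

theorem apply_add_add_apply_sub_of_even (hF : IsLucasSeq t 0 1 F) (hL : IsLucasSeq t 2 t L) (n : ℤ)
    {k : ℤ} (hk : Even k) : F (n + k) + F (n - k) = F n * L k := by
  rw [hF.apply_add hF, hF.apply_sub_of_even hF n hk, hF.companion_eq hL]
  ring

theorem apply_add_mul_apply_sub_of_even (hF : IsLucasSeq t 0 1 F) (n : ℤ) {k : ℤ} (hk : Even k) :
    F (n + k) * F (n - k) = F n ^ 2 - ((-1 : Rˣ) ^ n : Rˣ) * F k ^ 2 := by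
  have hn := hF.apply_add_one_mul_apply_sub_one n
  have hk' := hF.apply_add_one_mul_apply_sub_one k
  rw [hk.neg_one_zpow, Units.val_one] at hk'
  rw [hF.apply_add hF, hF.apply_sub_of_even hF n hk]
  linear_combination F n ^ 2 * hk' - F k ^ 2 * hn + F n * F (n + 1) * F k * hF.apply_add_one k
    - F k ^ 2 * F (n + 1) * hF.apply_add_one n

theorem mul_eq_sq_sub_of_even (hF : IsLucasSeq t 0 1 F) (hL : IsLucasSeq t 2 t L) (m n : ℤ) {k : ℤ}
    (hk : Even k) :
    (2 * F m - F (n - k) * L m) * (2 * F m - F (n + k) * L m) =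
      (F m * L k - F n * L m) ^ 2 -
        F k ^ 2 * ((t ^ 2 + 4) * F m ^ 2 + ((-1 : Rˣ) ^ n : Rˣ) * L m ^ 2) := by
  have hsum := hF.apply_add_add_apply_sub_of_even hL n hk
  have hprod := hF.apply_add_mul_apply_sub_of_even n hk
  have hLk := hF.companion_sq hL k
  rw [hk.neg_one_zpow, Units.val_one] at hLk
  linear_combination L m ^ 2 * hprod - 2 * F m * L m * hsum - F m ^ 2 * hLk

end CommRing

section Int

variable {t : ℤ} {F L : ℤ → ℤ}

theorem mul_apply_mul_apply_add_one_pos (hF : IsLucasSeq t 0 1 F) (ht : t ≠ 0) {n : ℤ}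
    (hn : 1 ≤ n) : 0 < t * F n * F (n + 1) := by
  induction n, hn using Int.leInduction with
  | base =>
    rw [hF.apply_add_one, sub_self, hF.zero, hF.one]
    simpa using mul_self_pos.2 ht
  | succ n _ ih =>
    rw [hF.apply_add_one (n + 1), add_sub_cancel_right]
    calc 0 < (t * F (n + 1)) ^ 2 + t * F n * F (n + 1) := by positivity
      _ = t * F (n + 1) * (t * F (n + 1) + F n) := by ring

theorem apply_ne_zero (hF : IsLucasSeq t 0 1 F) (ht : t ≠ 0) {n : ℤ} (hn : 1 ≤ n) : F n ≠ 0 := by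
  intro h
  simpa [h] using hF.mul_apply_mul_apply_add_one_pos ht hn

theorem strictMonoOn_sq (hF : IsLucasSeq t 0 1 F) (ht : t ≠ 0) :
    StrictMonoOn (fun n ↦ F n ^ 2) (Set.Ici 2) := by
  refine strictMonoOn_of_lt_add_one Set.ordConnected_Ici fun n _ (hn : 2 ≤ n) _ ↦ ?_
  have hpos := hF.mul_apply_mul_apply_add_one_pos ht (n := n - 1) (by omega)
  rw [sub_add_cancel] at hpos
  have hsq : 0 < F (n - 1) ^ 2 := by
    have hne := hF.apply_ne_zero ht (n := n - 1) (by omega)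
    positivity
  have hle : F n ^ 2 ≤ t ^ 2 * F n ^ 2 :=
    le_mul_of_one_le_left (sq_nonneg _) ((one_le_sq_iff_one_le_abs t).2 (Int.one_le_abs ht))
  calc F n ^ 2 < t ^ 2 * F n ^ 2 + 2 * (t * F (n - 1) * F n) + F (n - 1) ^ 2 := by linarith
    _ = F (n + 1) ^ 2 := by rw [hF.apply_add_one]; ring

theorem injOn_Ici_two (hF : IsLucasSeq t 0 1 F) (ht : t ≠ 0) : Set.InjOn F (Set.Ici 2) :=
  Set.InjOn.of_comp (g := (· ^ 2)) (hF.strictMonoOn_sq ht).injOn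

theorem companion_ne_zero (hF : IsLucasSeq t 0 1 F) (hL : IsLucasSeq t 2 t L) (ht : t ≠ 0)
    (n : ℤ) : L n ≠ 0 := by
  intro h
  have hsq := hF.companion_sq hL n
  rw [h] at hsq
  have hdvd : t ^ 2 + 4 ∣ 4 :=
    ⟨-((-1 : ℤˣ) ^ n : ℤˣ) * F n ^ 2, by
      linear_combination (-((-1 : ℤˣ) ^ n : ℤˣ) : ℤ) * hsq -
        4 * Int.units_coe_mul_self ((-1 : ℤˣ) ^ n)⟩
  have hpos : 0 < t ^ 2 := by positivity
  linarith [Int.le_of_dvd four_pos hdvd]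

theorem discr_mul_sq_add_ne_zero (hF : IsLucasSeq t 0 1 F) (hL : IsLucasSeq t 2 t L)
    (m : ℤ) (ε : ℤˣ) : (t ^ 2 + 4) * F m ^ 2 + ε * L m ^ 2 ≠ 0 := by
  rcases Int.units_eq_one_or ε with rfl | rfl
  · intro h
    rw [Units.val_one, one_mul] at h
    obtain ⟨hF0, hL0⟩ := (add_eq_zero_iff_of_nonneg (by positivity) (sq_nonneg _)).1 h
    have hsq := hF.companion_sq hL m
    rw [hF0, hL0] at hsq
    simp at hsq
  · rw [hF.companion_sq hL, Units.val_neg, Units.val_one]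
    ring_nf
    simp

end Int

end IsLucasSeq

/-- The integer `D_{m,n}` whose squarefree parts are studied, for the Lucas sequences `F = 𝓕` and
`L = 𝓛`. -/
def lucasD (b : ℤ) (F L : ℤ → ℤ) (m n : ℤ) : ℤ :=
  L m * (2 * F m - F n * L m) * b

namespace IsLucasSeq

variable {t : ℤ} {F L : ℤ → ℤ}

theorem finite_setOf_isSquare_lucasD_mul (hF : IsLucasSeq t 0 1 F) (hL : IsLucasSeq t 2 t L)
    (ht : t ≠ 0) {b : ℤ} (hb : b ≠ 0) (m : ℤ) {k : ℤ} (hk : Even k) (hk0 : 0 < k) :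
    {n | 2 ≤ n ∧ IsSquare (lucasD b F L m (n - k) * lucasD b F L m (n + k))}.Finite := by
  have hc : L m * b ≠ 0 := mul_ne_zero (hF.companion_ne_zero hL ht m) hb
  let X (n : ℤ) : ℤ := L m * b * (F m * L k - F n * L m)
  let K (ε : ℤˣ) : ℤ := (L m * b * F k) ^ 2 * ((t ^ 2 + 4) * F m ^ 2 + ε * L m ^ 2)
  have hXK (n : ℤ) :
      lucasD b F L m (n - k) * lucasD b F L m (n + k) = X n ^ 2 - K ((-1) ^ n) := by
    unfold lucasD
    linear_combination (L m * b) ^ 2 * hF.mul_eq_sq_sub_of_even hL m n hk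
  have hK (ε : ℤˣ) : K ε ≠ 0 :=
    mul_ne_zero (pow_ne_zero 2 (mul_ne_zero hc (hF.apply_ne_zero ht hk0)))
      (hF.discr_mul_sq_add_ne_zero hL m ε)
  have hX : Set.InjOn X (Set.Ici 2) := fun i hi j hj hij ↦ by
    have hFL := sub_right_inj.1 (mul_left_cancel₀ hc hij)
    exact hF.injOn_Ici_two ht hi hj (mul_right_cancel₀ (hF.companion_ne_zero hL ht m) hFL)
  have hfin := Set.finite_iUnion fun ε ↦ finite_setOf_isSquare_sq_sub (hK ε)
  refine Set.Finite.of_finite_image (hfin.subset ?_) (hX.mono fun n hn ↦ hn.1)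
  rintro _ ⟨n, ⟨-, hn⟩, rfl⟩
  exact Set.mem_iUnion.2 ⟨(-1) ^ n, by rwa [hXK] at hn⟩

theorem eventually_not_isSquare_lucasD_mul (hF : IsLucasSeq t 0 1 F) (hL : IsLucasSeq t 2 t L)
    (ht : t ≠ 0) {b : ℤ} (hb : b ≠ 0) (m : ℤ) {c s : ℤ} (hc : 2 ≤ c) (hs : 0 < s) {k : ℕ}
    (hk : 0 < k) :
    ∀ᶠ j : ℕ in atTop,
      ¬IsSquare (lucasD b F L m (c + 4 * s * j) * lucasD b F L m (c + 4 * s * (j + k : ℕ))) := by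
  -- The step is a multiple of `4` so that half the distance between two terms is even.
  let mid (j : ℕ) : ℤ := c + 4 * s * j + 2 * (s * k)
  have hmid : Function.Injective mid := fun i j hij ↦ by simpa [mid, hs.ne'] using hij
  have hfin := hF.finite_setOf_isSquare_lucasD_mul hL ht hb m
    (k := 2 * (s * k)) (even_two_mul _) (by positivity)
  rw [← Nat.cofinite_eq_atTop]
  filter_upwards [(hfin.preimage hmid.injOn).compl_mem_cofinite] with j hj hsq
  have hle : c ≤ mid j := by
    rw [show mid j = c + (4 * s * j + 2 * (s * k)) by ring]
    exact le_add_of_nonneg_right (by positivity)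
  have hlow : mid j - 2 * (s * k) = c + 4 * s * j := add_sub_cancel_right _ _
  have hhigh : mid j + 2 * (s * k) = c + 4 * s * (j + k : ℕ) := by simp only [mid]; push_cast; ring
  exact hj ⟨hc.trans hle, by rwa [hlow, hhigh]⟩

end IsLucasSeq

theorem stmt_1_general {t b : ℤ} (ht : t ≠ 0) (hb : b ≠ 0) {F L : ℤ → ℤ}
    (hF : IsLucasSeq t 0 1 F) (hL : IsLucasSeq t 2 t L) (m n₀ B : ℤ) {N : ℤ} (hN : 0 < N) :
    {d : ℤ | Squarefree d ∧ ∃ n : ℤ, n ≡ n₀ [ZMOD N] ∧ B < n ∧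
      ∃ A : ℤ, 0 < A ∧ lucasD b F L m n = d * A ^ 2}.Infinite := by
  obtain ⟨q, ⟨hq, -⟩, -⟩ := existsUnique_add_zsmul_mem_Ioc hN n₀ (max B 2)
  rw [smul_eq_mul, max_lt_iff] at hq
  have hinf := infinite_squarefree_parts_of_eventually_not_isSquare fun k hk ↦
    hF.eventually_not_isSquare_lucasD_mul hL ht hb m hq.2.le hN hk
  refine hinf.mono ?_
  rintro d ⟨hd, j, hA⟩
  refine ⟨hd, n₀ + q * N + 4 * N * j, ?_, ?_, hA⟩
  · exact Int.modEq_iff_dvd.2 ⟨-(q + 4 * j), by ring⟩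
  · exact hq.1.trans_le (le_add_of_nonneg_right (by positivity))

theorem stmt_1 (p : ℕ) (hp : p.Prime) (hp8 : p % 8 = 5)
    (t b : ℤ) (ht : 0 < t) (hb : 0 < b)
    (hpt : t ^ 2 + 4 = b ^ 2 * (p : ℤ))
    (F L : ℤ → ℤ) (hF0 : F 0 = 0) (hF1 : F 1 = 1)
    (hF : ∀ k : ℤ, F (k + 2) = t * F (k + 1) + F k)
    (hL0 : L 0 = 2) (hL1 : L 1 = t)
    (hL : ∀ k : ℤ, L (k + 2) = t * L (k + 1) + L k)
    (m₀ : ℤ) (hm₀ : Odd m₀) (N : ℕ) (hNpos : 0 < N) (hNeven : Even N)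
    (n₀ : ℤ) (hn₀ : Odd n₀) :
    {d : ℤ | Squarefree d ∧ ∃ n : ℤ, n ≡ n₀ [ZMOD (N : ℤ)] ∧ 3 < n ∧
      ∃ A : ℤ, 0 < A ∧ L m₀ * (2 * F m₀ - F n * L m₀) * b = d * A ^ 2}.Infinite :=
  stmt_1_general ht.ne' hb.ne' ⟨hF0, hF1, hF⟩ ⟨hL0, hL1, hL⟩ m₀ n₀ 3 (by exact_mod_cast hNpos)
end

section
/- For every natural number n with n ≡ 3 or n ≡ −3 (mod 500) and n not divisible by 3, the class numbers of both imaginary quadratic fields ℚ(√(2 − F_n)) and ℚ(√(5(2 − F_n))) are divisible by 5. Moreover, the set of pairs of fields (ℚ(√(2 − F_n)), ℚ(√(5(2 − F_n)))), as n ranges over all such natural numbers, is infinite. -/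
open IntermediateField

open scoped TensorProduct
open NumberField Polynomial

/-!
Write `F_n - 2 = g (5 g + 2 l)`, where `g` and `l` are, up to sign, the Fibonacci and Lucas numbers
of some index `N` divisible by `250`; then `(l + g √5) / 2` is a unit of norm `1`. Such a unit gives
two rational quintics whose Lagrange resolvents satisfy `u₁u₄ = u₂u₃ = 1`, and adjoining a root
of the right one is a cyclic extension of degree `5` of `ℚ(√(2 - F_n))`, respectively of
`ℚ(√(5 (2 - F_n)))`. An affine substitution turns it into `X ^ 5 - X ^ 4 + c₂ X ^ 2 + c₁ X + c₀`
with `c₂` odd, which is a fifth power modulo no prime, so the extension is unramified.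

Class field theory is avoided as follows. Let `L / K` be cyclic of prime degree `p` without inertia,
with generator `σ`, and let `p` be prime to the class number and to the number of units of `K`.
Galois-stable ideals of `L` come from `K`, so Galois-stable principal ideals of `L` are generated by
elements of `K`, and by Hilbert 90 units of norm `1` have the form `ε / σ ε` with `ε` a unit.
As `p` divides `(1 - σ) ^ p` on units, every unit of `L` is a `p`-th power, which is absurd.

The fields are infinite in number because some `2 - F_n` has odd valuation at a prime avoiding any
finite set, whereas `ℚ(√x) = ℚ(√y)` forces `x y` to be a square.
-/

/-! ### Galois-stable ideals in extensions without inertia -/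

section Descent

variable {A B G : Type*} [CommRing A] [CommRing B] [Algebra A B] [Group G]
  [MulSemiringAction G B]

theorem sum_smul_mem_map_comap [Fintype G] [Algebra.IsInvariant A B G] {I : Ideal B}
    (hI : ∀ g : G, ∀ x ∈ I, g • x ∈ I) {x : B} (hx : x ∈ I) :
    ∑ g : G, g • x ∈ (I.comap (algebraMap A B)).map (algebraMap A B) := by
  obtain ⟨a, ha⟩ := Algebra.IsInvariant.isInvariant (A := A) (G := G) (∑ g : G, g • x) fun g ↦ by
    simp_rw [Finset.smul_sum, smul_smul]
    exact Fintype.sum_equiv (Equiv.mulLeft g) _ _ fun _ ↦ rfl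
  rw [← ha]
  refine Ideal.mem_map_of_mem _ ?_
  rw [Ideal.mem_comap, ha]
  exact I.sum_mem fun g _ ↦ hI g x hx

variable [SMulCommClass G A B]

variable (A B G) in
/-- The canonical map `B ⊗[A] B → ∏ g : G, B`, `a ⊗ b ↦ (a * g • b)_g`, which is an isomorphism
exactly for Galois extensions of commutative rings. -/
noncomputable def galoisSplitting : B ⊗[A] B →ₐ[A] G → B :=
  AlgHom.pi fun g ↦
    Algebra.TensorProduct.productMap (AlgHom.id A B) (MulSemiringAction.toAlgHom A B g)

@[simp]
theorem galoisSplitting_tmul (a b : B) (g : G) :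
    galoisSplitting A B G (a ⊗ₜ b) g = a * g • b := by
  simp [galoisSplitting]

theorem exists_galoisSplitting_one_eq_zero_of_mem_span {g : G} {y : B}
    (hy : y ∈ Ideal.span (Set.range fun x : B ↦ g • x - x)) :
    ∃ t, galoisSplitting A B G t 1 = 0 ∧ galoisSplitting A B G t g = y := by
  induction hy using Submodule.span_induction with
  | mem y hy =>
    obtain ⟨x, rfl⟩ := hy
    exact ⟨1 ⊗ₜ x - x ⊗ₜ 1, by simp, by simp⟩
  | zero => exact ⟨0, by simp, by simp⟩
  | add y z _ _ hy hz =>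
    obtain ⟨s, hs₁, hsg⟩ := hy
    obtain ⟨t, ht₁, htg⟩ := hz
    exact ⟨s + t, by simp [hs₁, ht₁], by simp [hsg, htg]⟩
  | smul a y _ hy =>
    obtain ⟨t, ht₁, htg⟩ := hy
    exact ⟨a ⊗ₜ 1 * t, by simp [ht₁], by simp [htg]⟩

theorem span_smul_sub_eq_top_of_inertia_eq_bot
    (h : ∀ M : Ideal B, M.IsMaximal → M.inertia G = ⊥) {g : G} (hg : g ≠ 1) :
    Ideal.span (Set.range fun x : B ↦ g • x - x) = ⊤ := by
  by_contra hne
  obtain ⟨M, hM, hle⟩ := Ideal.exists_le_maximal _ hne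
  have hgM : g ∈ M.inertia G := fun x ↦ hle (Ideal.subset_span ⟨x, rfl⟩)
  exact hg (by simpa [h M hM] using hgM)

theorem exists_galoisSplitting_eq_single [Finite G]
    (h : ∀ M : Ideal B, M.IsMaximal → M.inertia G = ⊥) :
    ∃ t, galoisSplitting A B G t 1 = 1 ∧ ∀ g ≠ 1, galoisSplitting A B G t g = 0 := by
  classical
  have := Fintype.ofFinite G
  have separate (g : G) (hg : g ≠ 1) :
      ∃ t, galoisSplitting A B G t 1 = 1 ∧ galoisSplitting A B G t g = 0 := by
    obtain ⟨t, ht₁, htg⟩ := exists_galoisSplitting_one_eq_zero_of_mem_span (A := A) (g := g)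
      (span_smul_sub_eq_top_of_inertia_eq_bot h hg ▸ Submodule.mem_top : (1 : B) ∈ _)
    exact ⟨1 - t, by simp [ht₁], by simp [htg]⟩
  choose! t ht₁ htg using separate
  refine ⟨∏ g ∈ {1}ᶜ, t g, ?_, fun g hg ↦ ?_⟩
  · rw [map_prod, Finset.prod_apply]
    exact Finset.prod_eq_one fun g hg ↦ ht₁ g (by simpa using hg)
  · rw [map_prod, Finset.prod_apply]
    exact Finset.prod_eq_zero (by simpa using hg) (htg g hg)

theorem sum_galoisSplitting_mul_smul_mem_map_comap [Fintype G] [Algebra.IsInvariant A B G]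
    {I : Ideal B} (hI : ∀ g : G, ∀ x ∈ I, g • x ∈ I) (t : B ⊗[A] B) {x : B} (hx : x ∈ I) :
    ∑ g : G, galoisSplitting A B G t g * g • x ∈
      (I.comap (algebraMap A B)).map (algebraMap A B) := by
  induction t with
  | zero => simp
  | tmul a b =>
    simp_rw [galoisSplitting_tmul, mul_assoc, ← smul_mul', ← Finset.mul_sum]
    exact Ideal.mul_mem_left _ _ (sum_smul_mem_map_comap hI (I.mul_mem_left b hx))
  | add s t hs ht =>
    simp only [map_add, Pi.add_apply, add_mul, Finset.sum_add_distrib]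
    exact Ideal.add_mem _ hs ht

theorem map_comap_eq_of_inertia_eq_bot [Finite G] [Algebra.IsInvariant A B G]
    (h : ∀ M : Ideal B, M.IsMaximal → M.inertia G = ⊥)
    {I : Ideal B} (hI : ∀ g : G, ∀ x ∈ I, g • x ∈ I) :
    (I.comap (algebraMap A B)).map (algebraMap A B) = I := by
  have := Fintype.ofFinite G
  refine le_antisymm Ideal.map_comap_le fun x hx ↦ ?_
  obtain ⟨t, ht₁, ht⟩ := exists_galoisSplitting_eq_single (A := A) h
  have hsum := sum_galoisSplitting_mul_smul_mem_map_comap hI t hx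
  rwa [Finset.sum_eq_single 1 (fun g _ hg ↦ by rw [ht g hg, zero_mul]) (by simp), ht₁, one_mul,
    one_smul] at hsum

end Descent

/-! ### Divisibility by `p` from an automorphism of order `p` -/

theorem prime_dvd_one_sub_pow {R : Type*} [Ring R] {p : ℕ} (hp : p.Prime) {s : R}
    (hs : s ^ p = 1) : (p : R) ∣ (1 - s) ^ p := by
  obtain ⟨r, hr⟩ := (Commute.neg_right (Commute.one_left s)).exists_add_pow_prime_eq hp
  rw [sub_eq_add_neg, hr, one_pow, neg_pow, hs, mul_one, mul_one]
  refine dvd_add ?_ ⟨-s * r, by simp [mul_assoc]⟩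
  rcases hp.eq_two_or_odd' with rfl | hodd
  · norm_num
  · simp [hodd.neg_one_pow]

theorem exists_eq_nsmul_of_coprime {M : Type*} [AddCommGroup M] {m n : ℕ} (hmn : m.Coprime n)
    {x y : M} (h : m • x = n • y) : ∃ z, x = n • z := by
  refine ⟨m.gcdA n • y + m.gcdB n • x, ?_⟩
  have hbezout : (1 : ℤ) = m * m.gcdA n + n * m.gcdB n := by
    rw [← Nat.gcd_eq_gcd_ab, hmn.gcd_eq_one, Nat.cast_one]
  calc x = (m * m.gcdA n + n * m.gcdB n : ℤ) • x := by rw [← hbezout, one_smul]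
    _ = m.gcdA n • m • x + m.gcdB n • n • x := by module
    _ = n • (m.gcdA n • y + m.gcdB n • x) := by rw [h]; module

theorem exists_nsmul_pow_eq_pow_apply {M : Type*} [AddCommGroup M] (f : Module.End ℤ M) {m : ℕ}
    (h : ∀ x, ∃ y, m • x = f y) (k : ℕ) (x : M) : ∃ y, m ^ k • x = (f ^ k) y := by
  induction k generalizing x with
  | zero => exact ⟨x, by simp⟩
  | succ k ih =>
    obtain ⟨y, hy⟩ := h x
    obtain ⟨z, hz⟩ := ih y
    exact ⟨z, by rw [pow_succ, mul_smul, hy, ← map_nsmul, hz, pow_succ', Module.End.mul_apply]⟩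

theorem exists_eq_prime_nsmul {M : Type*} [AddCommGroup M] {p : ℕ} (hp : p.Prime)
    {s : Module.End ℤ M} (hs : s ^ p = 1) {m : ℕ} (hm : m.Coprime p)
    (h : ∀ x, ∃ y, m • x = y - s y) (x : M) : ∃ y, x = p • y := by
  obtain ⟨y, hy⟩ := exists_nsmul_pow_eq_pow_apply (1 - s) h p x
  obtain ⟨r, hr⟩ := prime_dvd_one_sub_pow hp hs
  refine exists_eq_nsmul_of_coprime (hm.pow_left p) (y := r y) ?_
  rw [hy, hr, Module.End.mul_apply, Module.End.natCast_apply]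

theorem finrank_eq_zero_of_forall_exists_eq_nsmul {M : Type*} [AddCommGroup M] [Module.Finite ℤ M]
    {n : ℕ} (hn : n ≠ 1) (h : ∀ x : M, ∃ y, x = n • y) : Module.finrank ℤ M = 0 := by
  obtain ⟨r, hr, hr0⟩ := Submodule.exists_sub_one_mem_and_smul_eq_zero_of_fg_of_le_smul
    (Ideal.span {(n : ℤ)}) (⊤ : Submodule ℤ M) Module.Finite.fg_top fun x _ ↦ by
      obtain ⟨y, rfl⟩ := h x
      rw [← natCast_zsmul]
      exact Submodule.smul_mem_smul (Ideal.mem_span_singleton_self _) trivial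
  refine Module.finrank_eq_zero_iff.2 fun x ↦ ⟨r, ?_, hr0 x trivial⟩
  rintro rfl
  rw [zero_sub, Ideal.mem_span_singleton, dvd_neg, Int.natCast_dvd, Int.natAbs_one,
    Nat.dvd_one] at hr
  exact hn hr

theorem unitRank_pos {L : Type*} [Field L] [NumberField L]
    (h : 3 ≤ Module.finrank ℚ L) : 0 < Units.rank L := by
  have hrank := InfinitePlace.card_add_two_mul_card_eq_rank L
  have hcard := InfinitePlace.card_eq_nrRealPlaces_add_nrComplexPlaces (K := L)
  unfold Units.rank
  omega

theorem exists_unit_ne_pow {L : Type*} [Field L] [NumberField L] (h : 3 ≤ Module.finrank ℚ L)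
    {n : ℕ} (hn : n ≠ 1) : ∃ u : (𝓞 L)ˣ, ∀ v, u ≠ v ^ n := by
  by_contra! hpow
  have hrank := finrank_eq_zero_of_forall_exists_eq_nsmul (M := Additive (𝓞 L)ˣ) hn hpow
  rw [Units.finrank_eq] at hrank
  exact (unitRank_pos h).ne' hrank

/-! ### Class numbers of base fields of unramified extensions of prime degree -/

theorem isPrincipal_of_isPrincipal_map {R S : Type*} [CommRing R] [IsDedekindDomain R]
    [Fintype (ClassGroup R)] [CommRing S] [IsDedekindDomain S] [Algebra R S] [Module.Finite R S]
    [Module.IsTorsionFree R S]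
    (hcop : (Module.finrank R S).Coprime (Fintype.card (ClassGroup R))) {I : Ideal R}
    (hI : (I.map (algebraMap R S)).IsPrincipal) : I.IsPrincipal := by
  refine Ideal.IsPrincipal.of_isPrincipal_pow_of_coprime hcop ?_
  obtain ⟨α, hα⟩ := hI
  rw [← Ideal.relNorm_algebraMap S, hα, Ideal.submodule_span_eq, Ideal.relNorm_singleton]
  exact ⟨_, rfl⟩

theorem dvd_pow_smul {G B : Type*} [Monoid G] [Monoid B] [MulDistribMulAction G B] {g : G} {b : B}
    (h : b ∣ g • b) (k : ℕ) : b ∣ g ^ k • b := by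
  induction k with
  | zero => simp
  | succ k ih =>
    rw [pow_succ', mul_smul]
    exact h.trans (map_dvd (MulDistribMulAction.toMonoidHom B g) ih)

theorem norm_unit_pow_card_eq_one {K L : Type*} [Field K] [Field L] [Algebra K L]
    (w : (𝓞 L)ˣ) :
    Algebra.norm K (((w ^ Nat.card (𝓞 K)ˣ : (𝓞 L)ˣ) : 𝓞 L) : L) = 1 := by
  have h := pow_card_eq_one' (x := Units.map (RingOfIntegers.norm K : 𝓞 L →* 𝓞 K) w)
  have hval := congrArg (fun z : (𝓞 K)ˣ ↦ ((z : 𝓞 K) : K)) h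
  simp only [Units.val_pow_eq_pow_val, map_pow, Units.val_one, map_one, Units.coe_map] at hval ⊢
  exact hval

theorem two_lt_of_coprime_card_units {K : Type*} [Field K] [NumberField K] {p : ℕ} (hp : p.Prime)
    (hunits : (Nat.card (𝓞 K)ˣ).Coprime p) : 2 < p := by
  refine hp.two_le.lt_of_ne ?_
  rintro rfl
  have hodd : Odd (Nat.card (𝓞 K)ˣ) := Nat.coprime_two_right.1 hunits
  have := pow_card_eq_one' (x := (-1 : (𝓞 K)ˣ))
  rw [hodd.neg_one_pow] at this
  have h := congrArg (fun z : (𝓞 K)ˣ ↦ ((z : 𝓞 K) : K)) this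
  norm_num at h

section Unramified

variable {K L : Type*} [Field K] [NumberField K] [Field L] [NumberField L] [Algebra K L]
  [IsGalois K L]

theorem exists_associated_algebraMap_of_inertia_eq_bot
    (hcop : (Module.finrank K L).Coprime (Nat.card (ClassGroup (𝓞 K))))
    (hinertia : ∀ M : Ideal (𝓞 L), M.IsMaximal → M.inertia Gal(L/K) = ⊥) {α : 𝓞 L}
    (hα : ∀ τ : Gal(L/K), α ∣ τ • α) : ∃ a, Associated (algebraMap (𝓞 K) (𝓞 L) a) α := by
  have hmap := map_comap_eq_of_inertia_eq_bot (A := 𝓞 K) hinertia (I := Ideal.span {α})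
    fun τ x hx ↦ by
      rw [Ideal.mem_span_singleton] at hx ⊢
      exact (hα τ).trans (map_dvd (MulSemiringAction.toRingHom _ (𝓞 L) τ) hx)
  obtain ⟨a, ha⟩ : ((Ideal.span {α}).comap (algebraMap (𝓞 K) (𝓞 L))).IsPrincipal := by
    refine isPrincipal_of_isPrincipal_map (S := 𝓞 L) ?_ ⟨α, hmap⟩
    rwa [← IsFractionRing.finrank_eq (𝓞 K) K (𝓞 L) L, ← Nat.card_eq_fintype_card]
  refine ⟨a, ?_⟩
  rwa [ha, Ideal.submodule_span_eq, Ideal.map_span, Set.image_singleton,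
    Ideal.span_singleton_eq_span_singleton] at hmap

end Unramified

section Unramified

-- `Type` rather than `Type*`: the library's integral Hilbert 90 is stated in this universe.
variable {K L : Type} [Field K] [NumberField K] [Field L] [NumberField L] [Algebra K L]
  [IsGalois K L]

theorem exists_unit_mul_smul_eq_of_norm_eq_one
    (hcop : (Module.finrank K L).Coprime (Nat.card (ClassGroup (𝓞 K))))
    (hinertia : ∀ M : Ideal (𝓞 L), M.IsMaximal → M.inertia Gal(L/K) = ⊥) {σ : Gal(L/K)}
    (hσ : ∀ τ, τ ∈ Subgroup.zpowers σ) {u : (𝓞 L)ˣ}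
    (hu : Algebra.norm K ((u : 𝓞 L) : L) = 1) : ∃ ε : (𝓞 L)ˣ, (u : 𝓞 L) * σ • (ε : 𝓞 L) = ε := by
  have : IsCyclic Gal(L/K) := ⟨σ, hσ⟩
  obtain ⟨α, hα0, hα⟩ := groupCohomology.exists_mul_galRestrict_of_norm_eq_one
    (A := 𝓞 K) (K := K) (L := L) (B := 𝓞 L) hσ hu
  replace hα : u * σ • α = α := RingOfIntegers.ext <| by
    have hαL := congrArg (algebraMap (𝓞 L) L) hα
    rwa [map_mul, algebraMap_galRestrict_apply] at hαL
  have hdvd : α ∣ σ • α := ⟨(u⁻¹ : (𝓞 L)ˣ), by rw [mul_comm, Units.eq_inv_mul_iff_mul_eq, hα]⟩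
  obtain ⟨a, ε, hε⟩ := exists_associated_algebraMap_of_inertia_eq_bot hcop hinertia fun τ ↦ by
    obtain ⟨k, rfl⟩ := mem_powers_iff_mem_zpowers.2 (hσ τ)
    exact dvd_pow_smul hdvd k
  refine ⟨ε, mul_left_cancel₀ (a := algebraMap (𝓞 K) (𝓞 L) a) ?_ ?_⟩
  · intro ha
    exact hα0 (by rw [← hε, ha, zero_mul])
  · rw [mul_left_comm]
    rwa [← hε, smul_mul', smul_algebraMap] at hα

theorem prime_dvd_card_classGroup {p : ℕ} (hp : p.Prime) (hdeg : Module.finrank K L = p)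
    (hunits : (Nat.card (𝓞 K)ˣ).Coprime p)
    (hinertia : ∀ M : Ideal (𝓞 L), M.IsMaximal → M.inertia Gal(L/K) = ⊥) :
    p ∣ Nat.card (ClassGroup (𝓞 K)) := by
  by_contra hdvd
  have := Fact.mk hp
  have hcard : Nat.card Gal(L/K) = p := by rw [IsGalois.card_aut_eq_finrank, hdeg]
  have hcyclic : IsCyclic Gal(L/K) := isCyclic_of_prime_card hcard
  obtain ⟨σ, hσ⟩ := hcyclic.exists_generator
  let s : Module.End ℤ (Additive (𝓞 L)ˣ) :=
    (Units.map (MulDistribMulAction.toMonoidHom (𝓞 L) σ)).toAdditive.toIntLinearMap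
  have hs (k : ℕ) (u : Additive (𝓞 L)ˣ) :
      (((s ^ k) u).toMul : 𝓞 L) = σ ^ k • (u.toMul : 𝓞 L) := by
    induction k with
    | zero => simp
    | succ k ih => rw [pow_succ', pow_succ', mul_smul, ← ih]; rfl
  have hs_pow : s ^ p = 1 := by
    ext u
    refine RingOfIntegers.ext_iff.1 ((hs p u).trans ?_)
    rw [← hcard, pow_card_eq_one', one_smul]
    rfl
  have hdim : 3 ≤ Module.finrank ℚ L := by
    rw [← Module.finrank_mul_finrank ℚ K L, hdeg]
    nlinarith [Module.finrank_pos (R := ℚ) (M := K), two_lt_of_coprime_card_units hp hunits]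
  obtain ⟨u, hu⟩ := exists_unit_ne_pow hdim hp.ne_one
  obtain ⟨v, hv⟩ := exists_eq_prime_nsmul hp hs_pow hunits (fun w ↦ by
    obtain ⟨ε, hε⟩ := exists_unit_mul_smul_eq_of_norm_eq_one
      (hdeg ▸ (hp.coprime_iff_not_dvd.2 hdvd)) hinertia hσ (norm_unit_pow_card_eq_one w.toMul)
    exact ⟨.ofMul ε, eq_sub_of_add_eq (Units.ext hε)⟩) (.ofMul u)
  exact hu v.toMul hv

end Unramified

/-! ### Units of imaginary quadratic fields -/

theorem isTotallyComplex_of_sq_eq_intCast {K : Type*} [Field K] {w : K} {d : ℤ} (hd : d < 0)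
    (hw : w ^ 2 = d) : IsTotallyComplex K where
  isComplex v := by
    refine InfinitePlace.not_isReal_iff_isComplex.1 fun hv ↦ ?_
    have hreal := congrArg (InfinitePlace.embedding_of_isReal hv) hw
    rw [map_pow, map_intCast] at hreal
    exact (sq_nonneg _).not_gt (hreal ▸ Int.cast_lt_zero.2 hd)

section Units

variable {K : Type*} [Field K] [NumberField K]

theorem finite_units_of_finrank_eq_two [IsTotallyComplex K] (hK : Module.finrank ℚ K = 2) :
    Finite (𝓞 K)ˣ := by
  have hrank : Units.rank K = 0 := by
    rw [Units.rank, InfinitePlace.card_eq_nrRealPlaces_add_nrComplexPlaces,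
      IsTotallyComplex.nrRealPlaces_eq_zero]
    have := IsTotallyComplex.finrank (K := K)
    omega
  rw [← Units.finrank_eq, Module.finrank_eq_zero_iff_isTorsion] at hrank
  exact Module.finite_of_fg_torsion (Additive (𝓞 K)ˣ) hrank

theorem sub_one_le_finrank_of_dvd_card_units [Finite (𝓞 K)ˣ] {p : ℕ} (hp : p.Prime)
    (hdvd : p ∣ Nat.card (𝓞 K)ˣ) : p - 1 ≤ Module.finrank ℚ K := by
  have := Fact.mk hp
  obtain ⟨u, rfl⟩ := exists_prime_orderOf_dvd_card' p hdvd
  have hu : IsPrimitiveRoot ((u : 𝓞 K) : K) (orderOf u) :=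
    (IsPrimitiveRoot.orderOf u).map_of_injective
      (f := (algebraMap (𝓞 K) K : 𝓞 K →* K).comp (Units.coeHom (𝓞 K)))
      (RingOfIntegers.coe_injective.comp Units.val_injective)
  simpa [Nat.totient_prime hp] using
    hu.lcm_totient_le_finrank hu (by simpa using cyclotomic.irreducible_rat hp.pos)

theorem coprime_card_units_of_finrank_eq_two [IsTotallyComplex K]
    (hK : Module.finrank ℚ K = 2) {p : ℕ} (hp : p.Prime) (hp5 : 5 ≤ p) :
    (Nat.card (𝓞 K)ˣ).Coprime p := by
  have := finite_units_of_finrank_eq_two hK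
  refine ((hp.coprime_iff_not_dvd).2 fun hdvd ↦ ?_).symm
  have := sub_one_le_finrank_of_dvd_card_units hp hdvd
  omega

end Units

/-! ### Galois extensions of prime degree generated by a root -/

theorem isGalois_of_exists_aeval_minpoly_eq_zero {K L : Type*} [Field K] [Field L] [Algebra K L]
    (pb : PowerBasis K L) (hdeg : (Module.finrank K L).Prime) {z : L}
    (hz : aeval z (minpoly K pb.gen) = 0) (hne : z ≠ pb.gen) : IsGalois K L := by
  have := pb.finite
  let σ : Gal(L/K) := AlgEquiv.ofBijective (pb.lift z hz) (Algebra.IsAlgebraic.algHom_bijective _)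
  have hσ : σ ≠ 1 := fun h ↦ hne <| by rw [← pb.lift_gen z hz]; exact DFunLike.congr_fun h pb.gen
  have hdvd : Nat.card Gal(L/K) ∣ Module.finrank K L := by
    rw [← Subgroup.card_top, ← IntermediateField.finrank_fixedField_eq_card]
    exact Dvd.intro_left _ (Module.finrank_mul_finrank K _ L)
  have : Nontrivial Gal(L/K) := ⟨σ, 1, hσ⟩
  exact .of_card_aut_eq_finrank _ _
    (((Nat.dvd_prime hdeg).1 hdvd).resolve_left Finite.one_lt_card.ne')

theorem charpoly_gen_eq_map_minpoly {K L : Type*} [Field K] [Field L] [Algebra K L]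
    [Fintype Gal(L/K)] [IsGalois K L] (pb : PowerBasis K L) :
    MulSemiringAction.charpoly Gal(L/K) pb.gen = (minpoly K pb.gen).map (algebraMap K L) := by
  have := pb.finite
  obtain ⟨p, hp, hpdeg, hpm⟩ := lifts_and_natDegree_eq_and_monic
    (Algebra.IsInvariant.charpoly_mem_lifts K L Gal(L/K) pb.gen)
    (MulSemiringAction.monic_charpoly Gal(L/K) pb.gen)
  have hroot : aeval pb.gen p = 0 := by
    rw [← eval_map_algebraMap, hp, MulSemiringAction.eval_charpoly]
  have hmonic := minpoly.monic (Algebra.IsIntegral.isIntegral (R := K) pb.gen)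
  have hdeg : p.natDegree ≤ (minpoly K pb.gen).natDegree := by
    rw [hpdeg, MulSemiringAction.charpoly_eq, pb.natDegree_minpoly, ← pb.finrank,
      natDegree_finsetProd_X_sub_C_eq_card, Finset.card_univ, ← Nat.card_eq_fintype_card,
      IsGalois.card_aut_eq_finrank]
  rw [← hp, eq_of_monic_of_dvd_of_natDegree_le hmonic hpm (minpoly.dvd K _ hroot) hdeg]

theorem map_charpoly_eq_pow_of_inertia_eq_top {B G : Type*} [CommRing B] [Group G] [Fintype G]
    [MulSemiringAction G B] {M : Ideal B} (hM : M.inertia G = ⊤) (b : B) :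
    (MulSemiringAction.charpoly G b).map (Ideal.Quotient.mk M) =
      (X - C (Ideal.Quotient.mk M b)) ^ Nat.card G := by
  have hconst (g : G) : Ideal.Quotient.mk M (g • b) = Ideal.Quotient.mk M b :=
    Ideal.Quotient.mk_eq_mk_iff_sub_mem _ _ |>.2 ((hM ▸ Subgroup.mem_top g : g ∈ M.inertia G) b)
  simp [MulSemiringAction.charpoly_eq, Polynomial.map_prod, hconst]

theorem irreducible_map_of_coprime_finrank {k K : Type*} [Field k] [Field K] [Algebra k K]
    [FiniteDimensional k K] {F : k[X]} (hF : Irreducible F)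
    (hcop : F.natDegree.Coprime (Module.finrank k K)) : Irreducible (F.map (algebraMap k K)) := by
  have hne : F.map (algebraMap k K) ≠ 0 := map_ne_zero hF.ne_zero
  obtain ⟨q, hq, hqF⟩ := WfDvdMonoid.exists_irreducible_factor
    (not_isUnit_of_natDegree_pos _ (by simpa using hF.natDegree_pos)) hne
  have := Fact.mk hq
  have := (AdjoinRoot.powerBasis hq.ne_zero).finite
  have hfinrank : Module.finrank K (AdjoinRoot q) = q.natDegree := by
    rw [(AdjoinRoot.powerBasis hq.ne_zero).finrank, AdjoinRoot.powerBasis_dim]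
  have : FiniteDimensional k (AdjoinRoot q) := .trans k K _
  have hroot : aeval (AdjoinRoot.root q) F = 0 := by
    rw [← aeval_map_algebraMap K, AdjoinRoot.aeval_eq, AdjoinRoot.mk_eq_zero]
    exact hqF
  have hdvd : F.natDegree ∣ q.natDegree := by
    refine hcop.dvd_of_dvd_mul_left ?_
    rw [← hfinrank, Module.finrank_mul_finrank]
    have hmin := minpoly.degree_dvd (Algebra.IsIntegral.isIntegral (R := k) (AdjoinRoot.root q))
    rwa [← minpoly.eq_of_irreducible hF hroot, natDegree_mul_C
      (inv_ne_zero (leadingCoeff_ne_zero.2 hF.ne_zero))] at hmin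
  refine ((associated_of_dvd_of_natDegree_le hqF hne ?_).irreducible_iff).1 hq
  rw [natDegree_map]
  exact Nat.le_of_dvd hq.natDegree_pos hdvd

theorem inertia_eq_bot_of_map_ne_pow {K L : Type*} [Field K] [NumberField K] [Field L]
    [NumberField L] [Algebra K L] [IsGalois K L] (pb : PowerBasis K L)
    (hdeg : (Module.finrank K L).Prime) {F : ℤ[X]} (hF : F.Monic)
    (hmin : minpoly K pb.gen = F.map (algebraMap ℤ K)) {M : Ideal (𝓞 L)}
    (hM : ∀ t, F.map (algebraMap ℤ (𝓞 L ⧸ M)) ≠ (X - C t) ^ Module.finrank K L) :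
    M.inertia Gal(L/K) = ⊥ := by
  classical
  have hcard := IsGalois.card_aut_eq_finrank K L
  have : Fact (Nat.card Gal(L/K)).Prime := ⟨hcard ▸ hdeg⟩
  refine (M.inertia Gal(L/K)).eq_bot_or_eq_top_of_prime_card.resolve_right fun htop ↦ ?_
  have hroot : eval₂ (algebraMap ℤ L) pb.gen F = 0 := by
    rw [← aeval_def, ← aeval_map_algebraMap K, ← hmin, minpoly.aeval]
  let ζ : 𝓞 L := ⟨pb.gen, F, hF, hroot⟩
  have hchar : MulSemiringAction.charpoly Gal(L/K) ζ = F.map (algebraMap ℤ (𝓞 L)) := by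
    refine map_injective (algebraMap (𝓞 L) L) RingOfIntegers.coe_injective ?_
    rw [Polynomial.map_map, ← IsScalarTower.algebraMap_eq, IsScalarTower.algebraMap_eq ℤ K L,
      ← Polynomial.map_map, ← hmin, ← charpoly_gen_eq_map_minpoly, MulSemiringAction.charpoly_eq,
      MulSemiringAction.charpoly_eq, Polynomial.map_prod]
    simp only [Polynomial.map_sub, map_X, map_C]
    rfl
  apply hM (Ideal.Quotient.mk M ζ)
  rw [← hcard, ← map_charpoly_eq_pow_of_inertia_eq_top htop, hchar, Polynomial.map_map]
  rfl

/-! ### The quintic polynomials -/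

section Quintic

variable {R : Type*} [CommRing R]

/-- The monic quintic `X ^ 5 - X ^ 4 + c₂ X ^ 2 + c₁ X + c₀`; when `c₂` is an odd integer it is not
a fifth power modulo any prime. -/
noncomputable def quintic (c₂ c₁ c₀ : R) : R[X] :=
  X ^ 5 - X ^ 4 + C c₂ * X ^ 2 + C c₁ * X + C c₀

theorem map_quintic {S : Type*} [CommRing S] (f : R →+* S) (c₂ c₁ c₀ : R) :
    (quintic c₂ c₁ c₀).map f = quintic (f c₂) (f c₁) (f c₀) := by
  simp [quintic]

theorem natDegree_quintic [Nontrivial R] (c₂ c₁ c₀ : R) : (quintic c₂ c₁ c₀).natDegree = 5 := by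
  unfold quintic
  compute_degree!

theorem monic_quintic (c₂ c₁ c₀ : R) : (quintic c₂ c₁ c₀).Monic := by
  unfold quintic
  monicity!

theorem X_sub_C_mul_X_sub_C_dvd_quintic {c₂ c₁ c₀ z y : R}
    (hz : z ^ 5 - z ^ 4 + c₂ * z ^ 2 + c₁ * z + c₀ = 0)
    (hy : y ^ 4 + (z - 1) * y ^ 3 + (z ^ 2 - z) * y ^ 2 + (z ^ 3 - z ^ 2 + c₂) * y +
      (z ^ 4 - z ^ 3 + c₂ * z + c₁) = 0) :
    (X - C z) * (X - C y) ∣ quintic c₂ c₁ c₀ := by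
  let Q : R[X] := X ^ 4 + C (z - 1) * X ^ 3 + C (z ^ 2 - z) * X ^ 2 + C (z ^ 3 - z ^ 2 + c₂) * X +
    C (z ^ 4 - z ^ 3 + c₂ * z + c₁)
  have hQ : quintic c₂ c₁ c₀ = (X - C z) * Q := by
    have hz' := congrArg C hz
    simp only [C_add, C_sub, C_mul, C_pow, C_0] at hz'
    simp only [quintic, Q, C_add, C_sub, C_mul, C_pow, C_1]
    linear_combination hz'
  rw [hQ]
  exact mul_dvd_mul_left _ (dvd_iff_isRoot.2 (by simpa [Q] using hy))

theorem aeval_quintic {S : Type*} [CommRing S] [Algebra R S] (c₂ c₁ c₀ : ℤ) (z : S) :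
    aeval z (quintic (c₂ : R) c₁ c₀) = z ^ 5 - z ^ 4 + c₂ * z ^ 2 + c₁ * z + c₀ := by
  simp [quintic]

theorem quintic_ne_X_sub_C_pow [Nontrivial R] {c₂ : R} (hc₂ : Odd c₂) (c₁ c₀ t : R) :
    quintic c₂ c₁ c₀ ≠ (X - C t) ^ 5 := by
  intro h
  have hcoeff (i : ℕ) : (quintic c₂ c₁ c₀).coeff i = (-t) ^ (5 - i) * (Nat.choose 5 i : ℕ) := by
    rw [h, sub_eq_add_neg, ← C_neg, coeff_X_add_C_pow]
  have h₄ : -1 = -t * 5 := by simpa [quintic, coeff_X, coeff_C] using hcoeff 4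
  have h₃ : 0 = (-t) ^ 2 * 10 := by
    simpa [quintic, coeff_X, coeff_C, show Nat.choose 5 3 = 10 from rfl] using hcoeff 3
  have h₂ : c₂ = (-t) ^ 3 * 10 := by
    simpa [quintic, coeff_X, coeff_C, show Nat.choose 5 2 = 10 from rfl] using hcoeff 2
  have two_eq_zero : (2 : R) = 0 := by linear_combination (-2 - 10 * t) * h₄ - 5 * h₃
  obtain ⟨k, rfl⟩ := hc₂
  exact one_ne_zero (α := R) (by linear_combination h₂ + t * h₃ - k * two_eq_zero)

end Quintic

section FiveDivides

variable {K : Type} [Field K] [NumberField K] [IsTotallyComplex K] {c₂ c₁ c₀ : ℤ}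

theorem five_dvd_card_classGroup_of_minpoly_eq_quintic (hK : Module.finrank ℚ K = 2)
    (hc₂ : Odd c₂) {L : Type} [Field L] [Algebra K L] (pb : PowerBasis K L)
    (hmin : minpoly K pb.gen = quintic (c₂ : K) c₁ c₀) {y : L}
    (hy : (X - C pb.gen) * (X - C y) ∣ quintic (c₂ : L) c₁ c₀) :
    5 ∣ Nat.card (ClassGroup (𝓞 K)) := by
  have := pb.finite
  have : CharZero L := charZero_of_injective_algebraMap (algebraMap K L).injective
  have : NumberField L := { to_finiteDimensional := .trans ℚ K L }
  have hdeg : Module.finrank K L = 5 := by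
    rw [pb.finrank, ← pb.natDegree_minpoly, hmin, natDegree_quintic]
  have hdeg_prime : (Module.finrank K L).Prime := hdeg ▸ Nat.prime_five
  have hminL : (minpoly K pb.gen).map (algebraMap K L) = quintic (c₂ : L) c₁ c₀ := by
    simp [hmin, map_quintic]
  have hyroot : aeval y (minpoly K pb.gen) = 0 := by
    rw [← eval_map_algebraMap, hminL]
    exact dvd_iff_isRoot.1 ((dvd_mul_left _ _).trans hy)
  have hne : y ≠ pb.gen := by
    rintro rfl
    have hirr := minpoly.irreducible (Algebra.IsIntegral.isIntegral (R := K) pb.gen)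
    exact not_isUnit_X_sub_C _ ((hminL ▸ hirr.separable.map.squarefree) _ hy)
  have := isGalois_of_exists_aeval_minpoly_eq_zero pb hdeg_prime hyroot hne
  refine prime_dvd_card_classGroup Nat.prime_five hdeg
    (coprime_card_units_of_finrank_eq_two hK Nat.prime_five le_rfl) fun M hM ↦
      inertia_eq_bot_of_map_ne_pow pb hdeg_prime (monic_quintic c₂ c₁ c₀) ?_ fun t ↦ ?_
  · simp [hmin, map_quintic]
  · rw [hdeg, map_quintic]
    exact quintic_ne_X_sub_C_pow (hc₂.map _) _ _ _

theorem five_dvd_card_classGroup_of_irreducible_quintic (hK : Module.finrank ℚ K = 2)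
    (hc₂ : Odd c₂) (hirr : Irreducible (quintic (c₂ : ℚ) c₁ c₀))
    (hroot : ∀ (L : Type) [Field L] [CharZero L] [Algebra K L] (z : L),
      z ^ 5 - z ^ 4 + c₂ * z ^ 2 + c₁ * z + c₀ = 0 →
        ∃ y : L, (X - C z) * (X - C y) ∣ quintic (c₂ : L) c₁ c₀) :
    5 ∣ Nat.card (ClassGroup (𝓞 K)) := by
  have hirrK : Irreducible (quintic (c₂ : K) c₁ c₀) := by
    simpa [map_quintic] using irreducible_map_of_coprime_finrank (K := K) hirr (by
      rw [hK, natDegree_quintic]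
      norm_num)
  have := Fact.mk hirrK
  let pb := AdjoinRoot.powerBasis hirrK.ne_zero
  have : CharZero (AdjoinRoot (quintic (c₂ : K) c₁ c₀)) :=
    charZero_of_injective_algebraMap (algebraMap K _).injective
  have hmin : minpoly K pb.gen = quintic (c₂ : K) c₁ c₀ := by
    rw [AdjoinRoot.powerBasis_gen, AdjoinRoot.minpoly_root hirrK.ne_zero,
      (monic_quintic ..).leadingCoeff, inv_one, C_1, mul_one]
  obtain ⟨y, hy⟩ := hroot _ pb.gen (by
    simpa only [hmin, aeval_quintic] using minpoly.aeval K pb.gen)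
  exact five_dvd_card_classGroup_of_minpoly_eq_quintic hK hc₂ pb hmin hy

end FiveDivides

/-! ### A second root of the quintic -/

section SecondRoot

variable {L : Type*} [Field L] [CharZero L]

theorem exists_root_of_quadratic_factors {θ p q r m D t R : L}
    (hp : 4 * p = 4 * m + θ ^ 2 - D ^ 2) (hq : 2 * q = θ * m - D * t) (hr : 4 * r = m ^ 2 - t ^ 2)
    (hR : 4 * R ^ 2 = (θ - D) ^ 2 - 8 * (m - t)) :
    ∃ x, x ^ 4 + θ * x ^ 3 + p * x ^ 2 + q * x + r = 0 := by
  obtain ⟨x, hx⟩ : ∃ x, x = (D - θ + 2 * R) / 4 := ⟨_, rfl⟩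
  have hroot : x ^ 2 + (θ - D) / 2 * x + (m - t) / 2 = 0 := by
    rw [hx]
    linear_combination hR / 16
  refine ⟨x, ?_⟩
  linear_combination (x ^ 2 + (θ + D) / 2 * x + (m + t) / 2) * hroot + hp * x ^ 2 / 4 +
    hq * x / 2 + hr / 4

-- `D = A / δ` with `D ^ 2 = V / δ`, `t = B / δ` and `R = w * E / (s * δ)` in the previous lemma.
theorem exists_root_of_cleared_quadratic_factors {θ p q r δ A V B E w s : L} (hδ : δ ≠ 0)
    (hs : s ≠ 0) (hw : w ^ 2 = -s) (hV : A ^ 2 = δ * V)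
    (hq : 8 * q * δ ^ 2 = θ * δ * (4 * p * δ + V - θ ^ 2 * δ) - 4 * A * B)
    (hr : 64 * r * δ ^ 2 = (4 * p * δ + V - θ ^ 2 * δ) ^ 2 - 16 * B ^ 2)
    (hE : -4 * E ^ 2 = s * δ * (3 * θ ^ 2 * δ - 2 * θ * A - V - 8 * p * δ + 8 * B)) :
    ∃ x, x ^ 4 + θ * x ^ 3 + p * x ^ 2 + q * x + r = 0 := by
  have hD : (A / δ) ^ 2 = V / δ := by
    rw [div_pow, hV]
    field_simp
  refine exists_root_of_quadratic_factors (m := p + (V / δ - θ ^ 2) / 4) (D := A / δ)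
    (t := B / δ) (R := w * E / (s * δ)) ?_ ?_ ?_ ?_
  · linear_combination hD
  · field_simp
    linear_combination hq
  · field_simp
    linear_combination hr
  · rw [div_pow, mul_pow, hw, sub_sq, hD]
    field_simp
    linear_combination 4 * hE

-- The roots are `θ = u₁ + u₂ + u₃ + u₄` with Lagrange resolvents satisfying `u₁u₄ = u₂u₃ = 1`.
-- Below, `A / δ` expresses `D = √5 ((u₁ + u₄) - (u₂ + u₃))` as a polynomial in `θ`; the pairs
-- `{θ₁, θ₄}` and `{θ₂, θ₃}` of other roots have sums `(-θ ± D) / 2`.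
theorem exists_root_depressed_cofactor_of_sq_eq_neg {g l θ w : L}
    (hl : l ^ 2 = 5 * g ^ 2 + 4) (hs : g * (5 * g + 2 * l) ≠ 0)
    (hδ : 145 * g ^ 3 + 65 * g ^ 2 * l + 36 * g ≠ 0) (hw : w ^ 2 = -(g * (5 * g + 2 * l)))
    (hθ : 2 * (θ ^ 5 - 10 * θ ^ 3 - (25 * g + 10 * l) * θ ^ 2 -
      (50 * g ^ 2 + 25 * g * l + 15) * θ) = 125 * g ^ 3 + 55 * g ^ 2 * l + 50 * g + 4 * l) :
    ∃ x, x ^ 4 + θ * x ^ 3 + (θ ^ 2 - 10) * x ^ 2 + (θ ^ 3 - 10 * θ - 25 * g - 10 * l) * x +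
      (θ ^ 4 - 10 * θ ^ 2 - (25 * g + 10 * l) * θ - 50 * g ^ 2 - 25 * g * l - 15) = 0 := by
  refine exists_root_of_cleared_quadratic_factors hδ hs hw
      (A := 20 * θ ^ 4 + 10 * θ ^ 3 * g + 2 * θ ^ 3 * l - 110 * θ ^ 2 * g ^ 2 -
        50 * θ ^ 2 * g * l - 228 * θ ^ 2 + 325 * θ * g ^ 3 + 145 * θ * g ^ 2 * l - 390 * θ * g -
        194 * θ * l - 570 * g ^ 2 - 290 * g * l - 176)
      (V := 100 * θ ^ 4 * g + 60 * θ ^ 4 * l - 500 * θ ^ 3 * g ^ 2 - 220 * θ ^ 3 * g * l -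
        120 * θ ^ 3 + 725 * θ ^ 2 * g ^ 3 + 325 * θ ^ 2 * g ^ 2 * l - 520 * θ ^ 2 * g -
        540 * θ ^ 2 * l - 900 * θ * g ^ 2 - 500 * θ * g * l - 1320 * θ + 4100 * g ^ 3 +
        1900 * g ^ 2 * l - 120 * g - 240 * l)
      (B := 45 * θ ^ 4 * g + 19 * θ ^ 4 * l - 55 * θ ^ 3 * g ^ 2 - 25 * θ ^ 3 * g * l -
        14 * θ ^ 3 - 475 * θ ^ 2 * g - 195 * θ ^ 2 * l - 1395 * θ * g ^ 2 - 615 * θ * g * l -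
        586 * θ - 2125 * g ^ 3 - 955 * g ^ 2 * l - 1150 * g - 124 * l)
      (E := -20 * θ ^ 4 * g - 6 * θ ^ 4 * l + 45 * θ ^ 3 * g ^ 2 + 21 * θ ^ 3 * g * l +
        12 * θ ^ 3 + 55 * θ ^ 2 * g ^ 3 + 25 * θ ^ 2 * g ^ 2 * l + 184 * θ ^ 2 * g +
        54 * θ ^ 2 * l - 850 * θ * g ^ 4 - 380 * θ * g ^ 3 * l - 65 * θ * g ^ 2 +
        111 * θ * g * l + 132 * θ - 125 * g ^ 3 - 45 * g ^ 2 * l + 100 * g + 24 * l)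
      ?_ ?_ ?_ ?_
  all_goals grind

theorem exists_root_depressed_cofactor_of_sq_eq_neg_five_mul {g l θ w : L}
    (hl : l ^ 2 = 5 * g ^ 2 + 4) (hs : g * (5 * g + 2 * l) ≠ 0)
    (hδ : 55 * g ^ 3 + 25 * g ^ 2 * l ≠ 0) (hw : w ^ 2 = -(5 * (g * (5 * g + 2 * l))))
    (hθ : 2 * (θ ^ 5 - 10 * θ ^ 3 - (25 * g + 10 * l) * θ ^ 2 -
      (50 * g ^ 2 + 25 * g * l + 15) * θ) = 75 * g ^ 3 + 35 * g ^ 2 * l + 50 * g + 4 * l) :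
    ∃ x, x ^ 4 + θ * x ^ 3 + (θ ^ 2 - 10) * x ^ 2 + (θ ^ 3 - 10 * θ - 25 * g - 10 * l) * x +
      (θ ^ 4 - 10 * θ ^ 2 - (25 * g + 10 * l) * θ - 50 * g ^ 2 - 25 * g * l - 15) = 0 := by
  refine exists_root_of_cleared_quadratic_factors hδ (mul_ne_zero (by norm_num) hs) hw
      (A := 20 * θ ^ 4 - 30 * θ ^ 3 * g - 10 * θ ^ 3 * l + 70 * θ ^ 2 * g ^ 2 +
        30 * θ ^ 2 * g * l - 180 * θ ^ 2 - 125 * θ * g ^ 3 - 55 * θ * g ^ 2 * l - 290 * θ * g -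
        110 * θ * l - 330 * g ^ 2 - 190 * g * l - 80)
      (V := 180 * θ ^ 4 * g + 100 * θ ^ 4 * l - 300 * θ ^ 3 * g ^ 2 - 140 * θ ^ 3 * g * l -
        200 * θ ^ 3 + 275 * θ ^ 2 * g ^ 3 + 125 * θ ^ 2 * g ^ 2 * l - 1420 * θ ^ 2 * g -
        900 * θ ^ 2 * l - 7100 * θ * g ^ 2 - 3140 * θ * g * l - 2200 * θ - 8500 * g ^ 3 -
        3700 * g ^ 2 * l - 5320 * g - 400 * l)
      (B := -35 * θ ^ 4 * g - 15 * θ ^ 4 * l + 35 * θ ^ 3 * g ^ 2 + 15 * θ ^ 3 * g * l +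
        30 * θ ^ 3 + 325 * θ ^ 2 * g + 135 * θ ^ 2 * l + 1295 * θ * g ^ 2 + 585 * θ * g * l +
        330 * θ + 1925 * g ^ 3 + 865 * g ^ 2 * l + 910 * g + 60 * l)
      (E := -120 * θ ^ 4 * g - 50 * θ ^ 4 * l + 195 * θ ^ 3 * g ^ 2 + 85 * θ ^ 3 * g * l +
        100 * θ ^ 3 - 325 * θ ^ 2 * g ^ 3 - 145 * θ ^ 2 * g ^ 2 * l + 980 * θ ^ 2 * g +
        450 * θ ^ 2 * l + 450 * θ * g ^ 4 + 200 * θ * g ^ 3 * l + 4085 * θ * g ^ 2 +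
        1735 * θ * g * l + 1100 * θ + 5625 * g ^ 3 + 2535 * g ^ 2 * l + 2780 * g + 200 * l)
      ?_ ?_ ?_ ?_
  all_goals grind

end SecondRoot

/-! ### Irreducibility of the quintic -/

section Irreducible

variable {k : Type*} [Field k] {c₂ c₁ c₀ : k}

theorem eq_zero_of_quadratic_dvd_quintic {a b : k}
    (h : X ^ 2 - C a * X - C b ∣ quintic c₂ c₁ c₀) :
    a ^ 4 + 3 * a ^ 2 * b + b ^ 2 - a ^ 3 - 2 * a * b + c₂ * a + c₁ = 0 ∧
      a ^ 3 * b + 2 * a * b ^ 2 - a ^ 2 * b - b ^ 2 + c₂ * b + c₀ = 0 := by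
  set r₁ := a ^ 4 + 3 * a ^ 2 * b + b ^ 2 - a ^ 3 - 2 * a * b + c₂ * a + c₁ with hr₁
  set r₀ := a ^ 3 * b + 2 * a * b ^ 2 - a ^ 2 * b - b ^ 2 + c₂ * b + c₀ with hr₀
  have hdiv : quintic c₂ c₁ c₀ = (X ^ 2 - C a * X - C b) *
      (X ^ 3 + C (a - 1) * X ^ 2 + C (a ^ 2 + b - a) * X +
        C (a ^ 3 + 2 * a * b - a ^ 2 - b + c₂)) + (C r₁ * X + C r₀) := by
    simp only [quintic, hr₁, hr₀, C_add, C_sub, C_mul, C_pow, C_1, map_ofNat]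
    ring
  have hdvd := (dvd_add_right (dvd_mul_right _ _)).1 (hdiv ▸ h)
  have hdeg : (X ^ 2 - C a * X - C b).natDegree = 2 := by compute_degree!
  have hzero := eq_zero_of_dvd_of_natDegree_lt hdvd
    (by rw [hdeg]; exact natDegree_linear_le.trans_lt one_lt_two)
  exact ⟨by simpa using congrArg (coeff · 1) hzero, by simpa using congrArg (coeff · 0) hzero⟩

theorem irreducible_quintic (hroot : ∀ x, x ^ 5 - x ^ 4 + c₂ * x ^ 2 + c₁ * x + c₀ ≠ 0)
    (hquad : ∀ a b, a ^ 4 + 3 * a ^ 2 * b + b ^ 2 - a ^ 3 - 2 * a * b + c₂ * a + c₁ = 0 →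
      a ^ 3 * b + 2 * a * b ^ 2 - a ^ 2 * b - b ^ 2 + c₂ * b + c₀ ≠ 0) :
    Irreducible (quintic c₂ c₁ c₀) := by
  have hdeg := natDegree_quintic c₂ c₁ c₀
  rw [(monic_quintic ..).irreducible_iff_lt_natDegree_lt fun h ↦ by simp [h] at hdeg, hdeg]
  intro q hq hqdeg hdvd
  obtain hq₁ | hq₂ : q.natDegree = 1 ∨ q.natDegree = 2 := by
    rw [Finset.mem_Ioc] at hqdeg
    omega
  · have hqeq : q = X - C (-q.coeff 0) := by
      rw [C_neg, sub_neg_eq_add, ← hq.eq_X_add_C hq₁]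
    rw [hqeq, dvd_iff_isRoot] at hdvd
    refine hroot (-q.coeff 0) ?_
    simpa only [quintic, IsRoot, eval_add, eval_sub, eval_mul, eval_pow, eval_X, eval_C] using hdvd
  · have hqeq : q = X ^ 2 - C (-q.coeff 1) * X - C (-q.coeff 0) := by
      have hlead : q.coeff 2 = 1 := hq₂ ▸ hq.coeff_natDegree
      conv_lhs => rw [q.as_sum_range_C_mul_X_pow, hq₂]
      simp only [Finset.sum_range_succ, Finset.sum_range_zero, hlead, C_1, C_neg]
      ring
    obtain ⟨h₁, h₀⟩ := eq_zero_of_quadratic_dvd_quintic (hqeq ▸ hdvd)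
    exact hquad _ _ h₁ h₀

end Irreducible

instance fact_prime_thirtyOne : Fact (Nat.Prime 31) := ⟨by norm_num⟩

instance fact_prime_sixtyOne : Fact (Nat.Prime 61) := ⟨by norm_num⟩

theorem irreducible_quintic_rat_of_zmod {p : ℕ} [Fact p.Prime] {c₂ c₁ c₀ : ℤ}
    (h : Irreducible (quintic (c₂ : ZMod p) c₁ c₀)) : Irreducible (quintic (c₂ : ℚ) c₁ c₀) := by
  have hmonic := monic_quintic c₂ c₁ c₀
  have hint : Irreducible (quintic c₂ c₁ c₀) :=
    hmonic.irreducible_of_irreducible_map (Int.castRingHom (ZMod p)) _ (by simpa [map_quintic])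
  simpa [map_quintic] using hmonic.irreducible_iff_irreducible_map_fraction_map (K := ℚ).1 hint

/-- `quintic c₂ c₁ c₀` is obtained from the depressed quintic
`X ^ 5 - 10 X ^ 3 - (25 g + 10 l) X ^ 2 - (50 g ^ 2 + 25 g l + 15) X - T / 2`, where
`T = 100 g ^ 3 + 45 g ^ 2 l + 50 g + 4 l + e (25 g ^ 3 + 10 g ^ 2 l)`, by substituting `5 X - 1`
for `X` and dividing by `5 ^ 5`. The sign `e = ±1` distinguishes the two quadratic fields. -/
structure IsRescaledQuintic {R : Type*} [CommRing R] (g l e c₂ c₁ c₀ : R) : Prop where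
  c₂_eq : 25 * c₂ = 4 - 5 * g - 2 * l
  c₁_eq : 125 * c₁ = -4 + 2 * (5 * g + 2 * l) - (5 * g * l + 10 * g ^ 2 + 4)
  c₀_eq : 6250 * c₀ = 8 - 10 * (5 * g + 2 * l) + 10 * (5 * g * l + 10 * g ^ 2 + 4) -
    (100 * g ^ 3 + 45 * g ^ 2 * l + 50 * g + 4 * l + e * (25 * g ^ 3 + 10 * g ^ 2 * l))

namespace IsRescaledQuintic

theorem map {R S : Type*} [CommRing R] [CommRing S] (f : R →+* S) {g l e c₂ c₁ c₀ : R}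
    (h : IsRescaledQuintic g l e c₂ c₁ c₀) :
    IsRescaledQuintic (f g) (f l) (f e) (f c₂) (f c₁) (f c₀) where
  c₂_eq := by
    simpa only [map_mul, map_add, map_sub, map_neg, map_pow, map_ofNat] using congrArg f h.c₂_eq
  c₁_eq := by
    simpa only [map_mul, map_add, map_sub, map_neg, map_pow, map_ofNat] using congrArg f h.c₁_eq
  c₀_eq := by
    simpa only [map_mul, map_add, map_sub, map_neg, map_pow, map_ofNat] using congrArg f h.c₀_eq

theorem irreducible_zmod_thirtyOne {g l e c₂ c₁ c₀ : ZMod 31}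
    (h : IsRescaledQuintic g l e c₂ c₁ c₀) (hgl : g = 7 ∧ l = 1 ∨ g = -7 ∧ l = -1)
    (he : e = 1 ∨ e = -1) : Irreducible (quintic c₂ c₁ c₀) := by
  obtain ⟨h₂, h₁, h₀⟩ := h
  replace h₂ := congrArg (5 * ·) h₂
  replace h₁ := congrArg (1 * ·) h₁
  replace h₀ := congrArg (18 * ·) h₀
  have hunit : (5 * 25 : ZMod 31) = 1 ∧ (1 * 125 : ZMod 31) = 1 ∧
      (18 * 6250 : ZMod 31) = 1 := by
    decide
  simp only [← mul_assoc, hunit, one_mul] at h₂ h₁ h₀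
  subst h₂ h₁ h₀
  obtain ⟨rfl, rfl⟩ | ⟨rfl, rfl⟩ := hgl <;> obtain rfl | rfl := he <;>
    exact irreducible_quintic (by decide +kernel) (by decide +kernel)

theorem irreducible_zmod_sixtyOne {g l e c₂ c₁ c₀ : ZMod 61}
    (h : IsRescaledQuintic g l e c₂ c₁ c₀) (hgl : g = -6 ∧ l = -1)
    (he : e = 1 ∨ e = -1) : Irreducible (quintic c₂ c₁ c₀) := by
  obtain ⟨h₂, h₁, h₀⟩ := h
  replace h₂ := congrArg (22 * ·) h₂
  replace h₁ := congrArg (41 * ·) h₁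
  replace h₀ := congrArg (24 * ·) h₀
  have hunit : (22 * 25 : ZMod 61) = 1 ∧ (41 * 125 : ZMod 61) = 1 ∧
      (24 * 6250 : ZMod 61) = 1 := by
    decide
  simp only [← mul_assoc, hunit, one_mul] at h₂ h₁ h₀
  subst h₂ h₁ h₀
  obtain ⟨rfl, rfl⟩ := hgl
  obtain rfl | rfl := he <;>
    exact irreducible_quintic (by decide +kernel) (by decide +kernel)

theorem intCast {R : Type*} [CommRing R] {g l e c₂ c₁ c₀ : ℤ}
    (h : IsRescaledQuintic g l e c₂ c₁ c₀) : IsRescaledQuintic (g : R) l e c₂ c₁ c₀ :=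
  h.map (Int.castRingHom R)

theorem irreducible_rat {g l e c₂ c₁ c₀ : ℤ} (h : IsRescaledQuintic g l e c₂ c₁ c₀)
    (hgl : ((g : ZMod 31) = 7 ∧ (l : ZMod 31) = 1 ∨ (g : ZMod 31) = -7 ∧ (l : ZMod 31) = -1) ∨
      ((g : ZMod 61) = -6 ∧ (l : ZMod 61) = -1))
    (he : e = 1 ∨ e = -1) : Irreducible (quintic (c₂ : ℚ) c₁ c₀) := by
  obtain h31 | h61 := hgl
  · exact irreducible_quintic_rat_of_zmod <| irreducible_zmod_thirtyOne
      h.intCast h31 (he.imp (by simp [·]) (by simp [·]))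
  · exact irreducible_quintic_rat_of_zmod <| irreducible_zmod_sixtyOne
      h.intCast h61 (he.imp (by simp [·]) (by simp [·]))

theorem depressed_eq {L : Type*} [CommRing L] {g l e c₂ c₁ c₀ z : L}
    (h : IsRescaledQuintic g l e c₂ c₁ c₀) (hz : z ^ 5 - z ^ 4 + c₂ * z ^ 2 + c₁ * z + c₀ = 0) :
    2 * ((5 * z - 1) ^ 5 - 10 * (5 * z - 1) ^ 3 - (25 * g + 10 * l) * (5 * z - 1) ^ 2 -
      (50 * g ^ 2 + 25 * g * l + 15) * (5 * z - 1)) =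
    100 * g ^ 3 + 45 * g ^ 2 * l + 50 * g + 4 * l + e * (25 * g ^ 3 + 10 * g ^ 2 * l) := by
  linear_combination 6250 * hz - 250 * z ^ 2 * h.c₂_eq - 50 * z * h.c₁_eq - h.c₀_eq

theorem exists_dvd_of_depressed_cofactor {L : Type*} [Field L] [CharZero L]
    {g l e c₂ c₁ c₀ z θ : L}
    (h : IsRescaledQuintic g l e c₂ c₁ c₀) (hz : z ^ 5 - z ^ 4 + c₂ * z ^ 2 + c₁ * z + c₀ = 0)
    (hθ : θ = 5 * z - 1)
    (hx : ∃ x, x ^ 4 + θ * x ^ 3 + (θ ^ 2 - 10) * x ^ 2 + (θ ^ 3 - 10 * θ - 25 * g - 10 * l) * x +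
      (θ ^ 4 - 10 * θ ^ 2 - (25 * g + 10 * l) * θ - 50 * g ^ 2 - 25 * g * l - 15) = 0) :
    ∃ y, (X - C z) * (X - C y) ∣ quintic c₂ c₁ c₀ := by
  obtain ⟨x, hx⟩ := hx
  subst hθ
  refine ⟨(x + 1) / 5, X_sub_C_mul_X_sub_C_dvd_quintic hz ?_⟩
  refine mul_left_cancel₀ (show (625 : L) ≠ 0 by norm_num) ?_
  linear_combination hx + 5 * (x + 1 + 5 * z) * h.c₂_eq + 5 * h.c₁_eq

end IsRescaledQuintic

/-- The properties of `g = ±F_N` and `l = ±L_N` (Fibonacci and Lucas numbers, with independent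
signs), for `N` a multiple of `250` but not of `3`, on which the divisibility by `5` of the class
numbers of `ℚ(√(-g (5 g + 2 l)))` and `ℚ(√(-5 g (5 g + 2 l)))` rests. The residues modulo `31` and
`61` are there to make the quintics irreducible. -/
structure IsAdmissible (g l : ℤ) : Prop where
  sq_eq : l ^ 2 = 5 * g ^ 2 + 4
  dvd : 125 ∣ g
  odd : Odd g
  mod_five : l % 5 = 2
  mod_prime :
    ((g : ZMod 31) = 7 ∧ (l : ZMod 31) = 1 ∨ (g : ZMod 31) = -7 ∧ (l : ZMod 31) = -1) ∨
      ((g : ZMod 61) = -6 ∧ (l : ZMod 61) = -1)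

namespace IsAdmissible

variable {g l : ℤ}

theorem ne_zero (h : IsAdmissible g l) : g ≠ 0 := by
  rintro rfl
  simpa using h.odd

theorem four_lt_sq (h : IsAdmissible g l) : 4 < g ^ 2 := by
  have := Int.le_of_dvd (by have := h.ne_zero; positivity) (pow_dvd_pow_of_dvd h.dvd 2)
  linarith

theorem mul_add_pos (h : IsAdmissible g l) : 0 < g * (5 * g + 2 * l) := by
  have hg := h.four_lt_sq
  have hprod : 0 < (g * (5 * g + 2 * l)) * (g * (5 * g - 2 * l)) := by
    have : 0 < g ^ 2 * (5 * g ^ 2 - 16) := mul_pos (by linarith) (by linarith)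
    linear_combination this + 4 * g ^ 2 * h.sq_eq
  by_contra! hle
  have hneg := neg_of_mul_pos_right hprod hle
  linarith

theorem denominator_ne_zero (h : IsAdmissible g l) : 145 * g ^ 3 + 65 * g ^ 2 * l + 36 * g ≠ 0 := by
  have h₁ : 20 * g + 9 * l ≠ 0 := fun h0 ↦ by
    have : 5 * g ^ 2 + 324 = 0 := by
      linear_combination (9 * l - 20 * g) * h0 - 81 * h.sq_eq
    exact absurd this (by positivity)
  have h₂ : 5 * g + l ≠ 0 := by
    have := h.mod_five
    omega
  convert mul_ne_zero h.ne_zero (mul_ne_zero h₁ h₂) using 1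
  linear_combination -9 * g * h.sq_eq

theorem denominator_five_mul_ne_zero (h : IsAdmissible g l) : 55 * g ^ 3 + 25 * g ^ 2 * l ≠ 0 := by
  have h₁ : 11 * g + 5 * l ≠ 0 := fun h0 ↦ by
    have : 4 * g ^ 2 + 100 = 0 := by
      linear_combination (5 * l - 11 * g) * h0 - 25 * h.sq_eq
    exact absurd this (by positivity)
  have h₂ := h.ne_zero
  convert mul_ne_zero (show 5 * g ^ 2 ≠ 0 by positivity) h₁ using 1
  ring

theorem exists_odd_eq (h : IsAdmissible g l) :
    ∃ G m, g = 125 * G ∧ l = 2 + 78125 * m ∧ Odd G ∧ Odd m := by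
  obtain ⟨G, hG⟩ := h.dvd
  have hprod : 5 ^ 7 ∣ (l - 2) * (l + 2) := ⟨G ^ 2, by
    linear_combination h.sq_eq + 5 * (g + 125 * G) * hG⟩
  have hcop : IsCoprime (5 ^ 7) (l + 2) := by
    refine IsCoprime.pow_left ((Prime.coprime_iff_not_dvd (by norm_num)).2 ?_)
    have := h.mod_five
    omega
  obtain ⟨m, hm⟩ := hcop.dvd_of_dvd_mul_right hprod
  have hG_odd : Odd G := (Int.odd_mul.1 (hG ▸ h.odd)).2
  have hGm : G ^ 2 = m * (78125 * m + 4) := by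
    have hsq := h.sq_eq
    rw [hG, show l = 2 + 78125 * m by linarith] at hsq
    linarith
  exact ⟨G, m, hG, by linarith, hG_odd, (Int.odd_mul.1 (hGm ▸ hG_odd.pow)).1⟩

theorem exists_isRescaledQuintic (h : IsAdmissible g l) {e : ℤ} (he : Odd e) :
    ∃ c₂ c₁ c₀, Odd c₂ ∧ IsRescaledQuintic g l e c₂ c₁ c₀ := by
  obtain ⟨G, m, rfl, rfl, hG, hm⟩ := h.exists_odd_eq
  obtain ⟨j, hj⟩ : Even (1125 * m + e * (G + 250 * m)) :=
    ((by decide : Odd (1125 : ℤ)).mul hm).add_odd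
      (he.mul (hG.add_even ((by decide : Even (250 : ℤ)).mul_right m)))
  refine ⟨-25 * G - 6250 * m, 2500 * m - 390625 * G * m - 1250 * G ^ 2,
    -300 * m + 25 * G ^ 2 + 78125 * G * m - 50 * e * G ^ 2 - 15625 * G ^ 2 * (2 * G + j),
    by grind, ?_, ?_, ?_⟩
  · ring
  · ring
  · linear_combination 48828125 * G ^ 2 * hj

variable {K : Type} [Field K] [NumberField K] {w : K}

theorem five_dvd_card_classGroup_of_sq_eq (h : IsAdmissible g l) (hK : Module.finrank ℚ K = 2)
    (hw : w ^ 2 = (-(g * (5 * g + 2 * l)) : ℤ)) : 5 ∣ Nat.card (ClassGroup (𝓞 K)) := by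
  have := isTotallyComplex_of_sq_eq_intCast (neg_neg_of_pos h.mul_add_pos) hw
  obtain ⟨c₂, c₁, c₀, hc₂, hc⟩ := h.exists_isRescaledQuintic odd_one
  refine five_dvd_card_classGroup_of_irreducible_quintic hK hc₂
    (hc.irreducible_rat h.mod_prime (.inl rfl)) fun L _ _ _ z hz ↦ ?_
  have hcL := hc.intCast (R := L)
  refine hcL.exists_dvd_of_depressed_cofactor hz rfl
    (exists_root_depressed_cofactor_of_sq_eq_neg (w := algebraMap K L w) ?_ ?_ ?_ ?_ ?_)
  · exact_mod_cast h.sq_eq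
  · exact_mod_cast h.mul_add_pos.ne'
  · exact_mod_cast h.denominator_ne_zero
  · rw [← map_pow, hw, map_intCast]
    push_cast
    ring
  · have := hcL.depressed_eq hz
    simp only [Int.cast_one] at this
    linear_combination this

theorem five_dvd_card_classGroup_of_sq_eq_five_mul (h : IsAdmissible g l)
    (hK : Module.finrank ℚ K = 2) (hw : w ^ 2 = (-(5 * (g * (5 * g + 2 * l))) : ℤ)) :
    5 ∣ Nat.card (ClassGroup (𝓞 K)) := by
  have := isTotallyComplex_of_sq_eq_intCast (by linarith [h.mul_add_pos]) hw
  obtain ⟨c₂, c₁, c₀, hc₂, hc⟩ := h.exists_isRescaledQuintic odd_neg_one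
  refine five_dvd_card_classGroup_of_irreducible_quintic hK hc₂
    (hc.irreducible_rat h.mod_prime (.inr rfl)) fun L _ _ _ z hz ↦ ?_
  have hcL := hc.intCast (R := L)
  refine hcL.exists_dvd_of_depressed_cofactor hz rfl
    (exists_root_depressed_cofactor_of_sq_eq_neg_five_mul (w := algebraMap K L w) ?_ ?_ ?_ ?_ ?_)
  · exact_mod_cast h.sq_eq
  · exact_mod_cast h.mul_add_pos.ne'
  · exact_mod_cast h.denominator_five_mul_ne_zero
  · rw [← map_pow, hw, map_intCast]
    push_cast
    ring
  · have := hcL.depressed_eq hz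
    simp only [Int.cast_neg, Int.cast_one] at this
    linear_combination this

end IsAdmissible

/-! ### Fibonacci numbers of index `500 k + 3` -/

theorem intCast_fib_add_mul_period {R : Type*} [Ring R] {P : ℤ} (h₀ : (Int.fib P : R) = 0)
    (h₁ : (Int.fib (P + 1) : R) = 1) (j n : ℤ) : (Int.fib (n + j * P) : R) = Int.fib n := by
  have hperiodic : Function.Periodic (fun n : ℤ ↦ (Int.fib n : R)) P := fun n ↦ by
    simp only [Int.fib_add n P, Int.cast_add, Int.cast_mul, h₀, h₁, mul_zero, zero_add, mul_one]
  exact hperiodic.int_mul j n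

theorem two_mul_fib_succ_sub_fib_sq {N : ℤ} (hN : Even N) :
    (2 * Int.fib (N + 1) - Int.fib N) ^ 2 = 5 * Int.fib N ^ 2 + 4 := by
  have hcassini := Int.fib_succ_mul_fib_pred_sub_fib_sq N
  rw [(Int.natAbs_even.2 hN).neg_one_pow] at hcassini
  have hrec := Int.fib_add_two (N - 1)
  rw [show N - 1 + 2 = N + 1 by ring, sub_add_cancel] at hrec
  linear_combination 4 * hcassini + 4 * Int.fib (N + 1) * hrec

theorem fib_two_mul_add_three_sub_two {N : ℤ} (hN : Even N) :
    Int.fib (2 * N + 3) - 2 =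
      Int.fib N * (5 * Int.fib N + 2 * (2 * Int.fib (N + 1) - Int.fib N)) := by
  have hrec : Int.fib (2 * N + 3) = 2 * Int.fib (2 * N + 1) + Int.fib (2 * N) := by
    rw [show 2 * N + 3 = 2 * N + 1 + 2 by ring, Int.fib_add_two,
      show 2 * N + 1 + 1 = 2 * N + 2 by ring, Int.fib_add_two]
    ring
  have hsq := two_mul_fib_succ_sub_fib_sq hN
  rw [hrec, Int.fib_two_mul_add_one, Int.fib_two_mul]
  linarith

theorem exists_sign_fib_residues {k : ℤ} (hk : ¬ 3 ∣ k) : ∃ s g l : ℤ, s ^ 2 = 1 ∧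
    g = s * Int.fib (250 * k) ∧ l = s * (2 * Int.fib (250 * k + 1) - Int.fib (250 * k)) ∧
    (g : ZMod 2) = 1 ∧ (l : ZMod 5) = 2 ∧
    (((g : ZMod 31) = 7 ∧ (l : ZMod 31) = 1 ∨ (g : ZMod 31) = -7 ∧ (l : ZMod 31) = -1) ∨
      ((g : ZMod 61) = -6 ∧ (l : ZMod 61) = -1)) := by
  obtain ⟨r, hr, j, rfl⟩ : ∃ r : ℕ, (r = 1 ∨ r = 2 ∨ r = 4 ∨ r = 5) ∧ ∃ j, k = r + 6 * j :=
    ⟨(k % 6).toNat, by omega, k / 6, by omega⟩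
  have h₂ := intCast_fib_add_mul_period (R := ZMod 2) (P := 1500)
    (by decide +kernel) (by decide +kernel) j
  have h₅ := intCast_fib_add_mul_period (R := ZMod 5) (P := 1500)
    (by decide +kernel) (by decide +kernel) j
  have h₃₁ := intCast_fib_add_mul_period (R := ZMod 31) (P := 1500)
    (by decide +kernel) (by decide +kernel) j
  have h₆₁ := intCast_fib_add_mul_period (R := ZMod 61) (P := 1500)
    (by decide +kernel) (by decide +kernel) j
  refine ⟨(-1) ^ r, _, _, by rw [← pow_mul, mul_comm, pow_mul, neg_one_sq, one_pow], rfl, rfl, ?_⟩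
  have hidx : 250 * ((r : ℤ) + 6 * j) = 250 * r + j * 1500 := by ring
  have hidx' : 250 * (r : ℤ) + j * 1500 + 1 = 250 * r + 1 + j * 1500 := by ring
  simp only [hidx, hidx', Int.cast_mul, Int.cast_sub, Int.cast_pow, Int.cast_neg, Int.cast_one,
    Int.cast_ofNat, h₂, h₅, h₃₁, h₆₁]
  obtain rfl | rfl | rfl | rfl := hr <;> decide +kernel

theorem exists_isAdmissible_of_not_three_dvd {k : ℤ} (hk : ¬ 3 ∣ k) :
    ∃ g l, IsAdmissible g l ∧ Int.fib (2 * (250 * k) + 3) - 2 = g * (5 * g + 2 * l) := by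
  have hN : Even (250 * k) := (by decide : Even (250 : ℤ)).mul_right k
  have hsq := two_mul_fib_succ_sub_fib_sq hN
  obtain ⟨s, g, l, hs, hg, hl, h₂, h₅, hp⟩ := exists_sign_fib_residues hk
  refine ⟨g, l, ⟨?_, ?_, ZMod.intCast_eq_one_iff_odd.1 h₂, ?_, hp⟩, ?_⟩
  · rw [hg, hl]
    linear_combination s ^ 2 * hsq + 4 * hs
  · have h250 : (125 : ℤ) ∣ Int.fib 250 := by decide +kernel
    exact hg ▸ (h250.trans (Int.fib_dvd _ _ ⟨k, rfl⟩)).mul_left s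
  · exact (ZMod.intCast_eq_intCast_iff' l 2 5).1 (by exact_mod_cast h₅)
  · rw [fib_two_mul_add_three_sub_two hN, hg, hl]
    linear_combination (-Int.fib (250 * k) * (5 * Int.fib (250 * k) +
      2 * (2 * Int.fib (250 * k + 1) - Int.fib (250 * k)))) * hs

theorem exists_isAdmissible {n : ℕ} (hn : n % 500 = 3 ∨ n % 500 = 497) (h3 : ¬ 3 ∣ n) :
    ∃ g l, IsAdmissible g l ∧ (Nat.fib n : ℤ) - 2 = g * (5 * g + 2 * l) := by
  obtain ⟨k, hk⟩ : ∃ k : ℤ, (2 * (250 * k) + 3).natAbs = n := by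
    obtain hn | hn := hn
    · exact ⟨n / 500, by omega⟩
    · exact ⟨-(n / 500) - 1, by omega⟩
  have hodd : Odd (2 * (250 * k) + 3) := ⟨250 * k + 1, by ring⟩
  rw [← hk, ← Int.fib_of_odd hodd]
  exact exists_isAdmissible_of_not_three_dvd (by omega)

/-! ### Fields generated by a square root -/

section SquareRoot

variable {F E : Type*} [Field F] [Field E] [Algebra F E] {x y : E} {a b : F}

theorem finrank_adjoin_simple_eq_two_of_sq_eq (ha : ¬ IsSquare a) (hx : x ^ 2 = algebraMap F E a) :
    Module.finrank F F⟮x⟯ = 2 := by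
  have hirr : Irreducible (X ^ 2 - C a) :=
    X_pow_sub_C_irreducible_of_prime Nat.prime_two fun r hr ↦ ha ⟨r, by rw [← hr, sq]⟩
  have hmonic : (X ^ 2 - C a).Monic := monic_X_pow_sub_C a two_ne_zero
  have hroot : aeval x (X ^ 2 - C a) = 0 := by simp [hx]
  rw [adjoin.finrank ⟨_, hmonic, hroot⟩, ← minpoly.eq_of_irreducible_of_monic hirr hroot hmonic,
    natDegree_X_pow_sub_C]

theorem exists_eq_add_mul_of_mem_adjoin_simple (hy : y ^ 2 = algebraMap F E b) (hx : x ∈ F⟮y⟯) :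
    ∃ p q, x = algebraMap F E p + algebraMap F E q * y := by
  have hmonic : (X ^ 2 - C b).Monic := monic_X_pow_sub_C b two_ne_zero
  have hroot : aeval y (X ^ 2 - C b) = 0 := by simp [hy]
  have hint : IsIntegral F y := ⟨_, hmonic, hroot⟩
  rw [← mem_toSubalgebra, adjoin_simple_toSubalgebra_of_isAlgebraic hint.isAlgebraic,
    Algebra.adjoin_singleton_eq_range_aeval] at hx
  obtain ⟨f, rfl⟩ := hx
  have hdeg : (f %ₘ (X ^ 2 - C b)).natDegree ≤ 1 := by
    have := natDegree_modByMonic_lt f hmonic fun h ↦ by simp [h] at hroot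
    rw [natDegree_X_pow_sub_C] at this
    omega
  obtain ⟨q, p, hqp⟩ := exists_eq_X_add_C_of_natDegree_le_one hdeg
  refine ⟨p, q, ?_⟩
  rw [AlgHom.toRingHom_eq_coe, RingHom.coe_coe, ← aeval_modByMonic_eq_self_of_root hroot, hqp]
  simp [add_comm]

theorem isSquare_of_sq_eq_of_mem_bot (hx : x ^ 2 = algebraMap F E a)
    (hbot : x ∈ (⊥ : IntermediateField F E)) : IsSquare a := by
  obtain ⟨r, rfl⟩ := mem_bot.1 hbot
  refine ⟨r, (algebraMap F E).injective ?_⟩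
  rw [← hx, map_mul, sq]

theorem isSquare_mul_of_adjoin_simple_eq (h2 : (2 : F) ≠ 0) (hx : x ^ 2 = algebraMap F E a)
    (hy : y ^ 2 = algebraMap F E b) (hxy : F⟮x⟯ = F⟮y⟯) : IsSquare (a * b) := by
  have hbot : x ∈ (⊥ : IntermediateField F E) ↔ y ∈ (⊥ : IntermediateField F E) := by
    rw [← adjoin_simple_eq_bot_iff, hxy, adjoin_simple_eq_bot_iff]
  by_cases hy_bot : y ∈ (⊥ : IntermediateField F E)
  · exact (isSquare_of_sq_eq_of_mem_bot hx (hbot.2 hy_bot)).mul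
      (isSquare_of_sq_eq_of_mem_bot hy hy_bot)
  obtain ⟨p, q, hpq⟩ := exists_eq_add_mul_of_mem_adjoin_simple hy (hxy ▸ mem_adjoin_simple_self F x)
  have hq : q ≠ 0 := by
    rintro rfl
    exact hy_bot (hbot.1 (mem_bot.2 ⟨p, by simp [hpq]⟩))
  have hp : p = 0 := by
    by_contra hp
    refine hy_bot (mem_bot.2 ⟨(a - p ^ 2 - q ^ 2 * b) / (2 * p * q), ?_⟩)
    have hne : algebraMap F E (2 * p * q) ≠ 0 := by simp [h2, hp, hq]
    rw [map_div₀, div_eq_iff hne]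
    simp only [map_sub, map_mul, map_pow, map_ofNat]
    rw [← hx, ← hy, hpq]
    ring
  refine ⟨q * b, (algebraMap F E).injective ?_⟩
  rw [map_mul, ← hx, hpq, hp]
  simp only [map_zero, zero_add, map_mul, ← hy]
  ring

end SquareRoot

theorem infinite_setOf_adjoin_sqrt {D : Set ℤ} (hD : ∀ d ∈ D, d ≠ 0)
    (hodd : ∀ M : ℕ, M ≠ 0 → ∃ d ∈ D, ∃ p : ℕ, p.Prime ∧ ¬ p ∣ M ∧ Odd (padicValInt p d)) :
    {F : IntermediateField ℚ ℂ | ∃ d ∈ D, ∃ c : ℂ, c ^ 2 = d ∧ F = ℚ⟮c⟯}.Infinite := by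
  intro hfin
  choose! δ hδ using fun F (hF : F ∈ hfin.toFinset) ↦ hfin.mem_toFinset.1 hF
  have hM : ∏ F ∈ hfin.toFinset, (δ F).natAbs ≠ 0 :=
    Finset.prod_ne_zero_iff.2 fun F hF ↦ Int.natAbs_ne_zero.2 (hD _ (hδ F hF).1)
  obtain ⟨d, hd, p, hp, hpM, hdp⟩ := hodd _ hM
  have : Fact p.Prime := ⟨hp⟩
  obtain ⟨c, hc⟩ := IsAlgClosed.exists_pow_nat_eq (d : ℂ) two_pos
  have hmem : ℚ⟮c⟯ ∈ hfin.toFinset := hfin.mem_toFinset.2 ⟨d, hd, c, hc, rfl⟩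
  obtain ⟨hδD, c', hc', hcc'⟩ := hδ _ hmem
  have hsq : IsSquare ((d : ℚ) * δ ℚ⟮c⟯) :=
    isSquare_mul_of_adjoin_simple_eq two_ne_zero (by simpa using hc) (by simpa using hc') hcc'
  obtain ⟨r, hr⟩ := Rat.isSquare_intCast_iff.1 (by exact_mod_cast hsq)
  have hval : padicValInt p (d * δ ℚ⟮c⟯) = padicValInt p d := by
    rw [padicValInt.mul (hD _ hd) (hD _ hδD), padicValInt.eq_zero_of_not_dvd fun h ↦ hpM
      ((Int.natCast_dvd.1 h).trans (Finset.dvd_prod_of_mem _ hmem)), add_zero]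
  have hr0 : r ≠ 0 := by
    rintro rfl
    exact mul_ne_zero (hD _ hd) (hD _ hδD) hr
  rw [← hval, hr, padicValInt.mul hr0 hr0] at hdp
  exact Nat.not_odd_iff_even.2 (Even.add_self _) hdp

theorem numberField_adjoin_of_sq_eq_intCast {c : ℂ} {d : ℤ} (hc : c ^ 2 = d) :
    NumberField ℚ⟮c⟯ :=
  have : FiniteDimensional ℚ ℚ⟮c⟯ := adjoin.finiteDimensional
    ⟨X ^ 2 - C (d : ℚ), monic_X_pow_sub_C _ two_ne_zero, by simp [← aeval_def, hc]⟩
  ⟨⟩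

theorem finrank_adjoin_eq_two_of_sq_eq_intCast {c : ℂ} {d : ℤ} (hd : d < 0) (hc : c ^ 2 = d) :
    Module.finrank ℚ ℚ⟮c⟯ = 2 :=
  finrank_adjoin_simple_eq_two_of_sq_eq (a := (d : ℚ))
    (fun h ↦ (Int.cast_lt_zero.2 hd).not_ge h.nonneg) (by simpa using hc)

theorem adjoinSimpleGen_sq_eq_intCast {c : ℂ} {d : ℤ} (hc : c ^ 2 = d) :
    AdjoinSimple.gen ℚ c ^ 2 = d :=
  Subtype.ext (by simpa using hc)

/-! ### Prime factors of Fibonacci numbers -/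

theorem fib_mul_add_one_modEq (m : ℤ) (k : ℕ) :
    Int.fib (m * k + 1) ≡ Int.fib (m + 1) ^ k [ZMOD Int.fib m] := by
  induction k with
  | zero => simp [Int.ModEq.refl]
  | succ k ih =>
    have hadd : Int.fib (m * (k + 1 : ℕ) + 1) =
        Int.fib (m * k + 1) * Int.fib (m + 1) + Int.fib m * Int.fib (m * k) := by
      rw [show m * (k + 1 : ℕ) + 1 = m * k + 1 + m by push_cast; ring, Int.fib_add,
        add_sub_cancel_right]
      ring
    rw [hadd, pow_succ]
    exact Int.modEq_add_fac_self.trans (ih.mul_right _)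

theorem fib_mul_succ_modEq (m : ℤ) (k : ℕ) : Int.fib (m * (k + 1 : ℕ)) ≡
    (k + 1) * Int.fib m * Int.fib (m + 1) ^ k [ZMOD Int.fib m ^ 2] := by
  induction k with
  | zero => simp [Int.ModEq.refl]
  | succ k ih =>
    obtain ⟨u, hu⟩ := Int.fib_dvd m (m * (k + 1 : ℕ)) (dvd_mul_right _ _)
    obtain ⟨v, hv⟩ := (fib_mul_add_one_modEq m (k + 1)).dvd
    obtain ⟨w, hw⟩ := ih.dvd
    have hadd : Int.fib (m * (k + 1 + 1 : ℕ)) =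
        (Int.fib (m * (k + 1 : ℕ) + 1) - Int.fib (m * (k + 1 : ℕ))) * Int.fib m +
          Int.fib (m * (k + 1 : ℕ)) * Int.fib (m + 1) := by
      have hrec := Int.fib_add_two (m * (k + 1 : ℕ) - 1)
      rw [show m * (k + 1 : ℕ) - 1 + 2 = m * (k + 1 : ℕ) + 1 by ring, sub_add_cancel] at hrec
      rw [show m * (k + 1 + 1 : ℕ) = m * (k + 1 : ℕ) + m by push_cast; ring, Int.fib_add, hrec]
      ring
    refine Int.modEq_of_dvd ⟨v + u + w * Int.fib (m + 1), ?_⟩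
    rw [hadd]
    push_cast at hu hv hw ⊢
    linear_combination Int.fib m * hv + Int.fib m * hu + Int.fib (m + 1) * hw

theorem padicValInt_fib_mul_prime {p : ℕ} [hp : Fact p.Prime] {m : ℤ}
    (h : 2 ≤ padicValInt p (Int.fib m)) :
    padicValInt p (Int.fib (m * p)) = padicValInt p (Int.fib m) + 1 := by
  have hm : Int.fib m ≠ 0 := fun h0 ↦ by simp [h0] at h
  have hpZ : Prime (p : ℤ) := Nat.prime_iff_prime_int.1 hp.out
  obtain ⟨w, hw⟩ : (p : ℤ) ^ 2 ∣ Int.fib m := (padicValInt_dvd_iff 2 _).2 (.inr h)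
  obtain ⟨v, hv⟩ := (fib_mul_succ_modEq m (p - 1)).symm.dvd
  rw [← Nat.cast_add_one, Nat.sub_add_cancel hp.out.one_le] at hv
  have hfactor : Int.fib (m * p) = Int.fib m * (p * (Int.fib (m + 1) ^ (p - 1) + p * (w * v))) := by
    linear_combination hv + Int.fib m * v * hw
  have hndvd : ¬ (p : ℤ) ∣ Int.fib (m + 1) ^ (p - 1) + p * (w * v) := fun hdvd ↦ by
    have hsucc := hpZ.dvd_of_dvd_pow ((dvd_add_left (dvd_mul_right _ _)).1 hdvd)
    have hgcd := Int.dvd_coe_gcd (hw ▸ dvd_mul_of_dvd_left (dvd_pow_self _ two_ne_zero) w) hsucc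
    rw [Int.gcd_fib, show m.gcd (m + 1) = 1 by simp] at hgcd
    exact hpZ.not_isUnit (isUnit_of_dvd_one (by simpa using hgcd))
  have hne : Int.fib (m + 1) ^ (p - 1) + p * (w * v) ≠ 0 := fun h0 ↦ hndvd (h0 ▸ dvd_zero _)
  rw [hfactor, padicValInt.mul hm (mul_ne_zero hpZ.ne_zero hne), padicValInt.mul hpZ.ne_zero hne,
    padicValInt.eq_zero_of_not_dvd hndvd, padicValInt.self hp.out.one_lt]

theorem odd_padicValInt_fib_or_odd_padicValInt_fib_mul_prime {p : ℕ} [Fact p.Prime] {m : ℤ}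
    (hm : m ≠ 0) (h : (p : ℤ) ∣ Int.fib m) :
    Odd (padicValInt p (Int.fib m)) ∨ Odd (padicValInt p (Int.fib (m * p))) := by
  obtain heven | hodd := Nat.even_or_odd (padicValInt p (Int.fib m))
  · right
    have hpos : 1 ≤ padicValInt p (Int.fib m) :=
      ((padicValInt_dvd_iff 1 _).1 (by rwa [pow_one])).resolve_left (by simpa)
    rw [padicValInt_fib_mul_prime (by obtain ⟨i, hi⟩ := heven; omega)]
    exact heven.add_one
  · exact .inl hodd

theorem padicValInt_two_sub_fib {p : ℕ} [hp : Fact p.Prime] (hp2 : p ≠ 2) {N : ℤ} (hN : Even N)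
    (hN0 : N ≠ 0) (h : (p : ℤ) ∣ Int.fib N) :
    padicValInt p (2 - Int.fib (2 * N + 3)) = padicValInt p (Int.fib N) := by
  set l := 2 * Int.fib (N + 1) - Int.fib N
  have hsq : l ^ 2 = 5 * Int.fib N ^ 2 + 4 := two_mul_fib_succ_sub_fib_sq hN
  have hfib : Int.fib (2 * N + 3) - 2 = Int.fib N * (5 * Int.fib N + 2 * l) :=
    fib_two_mul_add_three_sub_two hN
  have hndvd : ¬ (p : ℤ) ∣ 5 * Int.fib N + 2 * l := fun hdvd ↦ by
    have hdvd16 : (p : ℤ) ∣ 2 ^ 4 := by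
      have heq : (2 ^ 4 : ℤ) = (5 * Int.fib N + 2 * l) * (2 * l - 5 * Int.fib N) +
          Int.fib N * (5 * Int.fib N) := by
        linear_combination -4 * hsq
      exact heq ▸ (hdvd.mul_right _).add (h.mul_right _)
    exact hp2 ((Nat.prime_dvd_prime_iff_eq hp.out Nat.prime_two).1
      (hp.out.dvd_of_dvd_pow (by exact_mod_cast hdvd16)))
  have hne : 5 * Int.fib N + 2 * l ≠ 0 := fun h0 ↦ hndvd (h0 ▸ dvd_zero _)
  rw [← neg_sub, hfib, padicValInt, Int.natAbs_neg, ← padicValInt,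
    padicValInt.mul (by simpa) hne, padicValInt.eq_zero_of_not_dvd hndvd, add_zero]

theorem eq_of_prime_dvd_fib {p q r : ℕ} (hp : p.Prime) (hq : q.Prime) (hr : r.Prime)
    (hpq : p ∣ Nat.fib q) (hpr : p ∣ Nat.fib r) : q = r := by
  by_contra hne
  have hdvd := Nat.dvd_gcd hpq hpr
  rw [← Nat.fib_gcd, (Nat.coprime_primes hq hr).2 hne, Nat.fib_one] at hdvd
  exact hp.not_dvd_one hdvd

theorem infinite_setOf_prime_dvd_fib_prime :
    {p : ℕ | p.Prime ∧ ∃ q, q.Prime ∧ 3 < q ∧ p ∣ Nat.fib q}.Infinite := by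
  have hprime {q : ℕ} (hq : 3 < q) : (Nat.fib q).minFac.Prime := by
    refine Nat.minFac_prime (ne_of_gt ?_)
    calc 1 < Nat.fib 3 := by decide
      _ ≤ Nat.fib q := Nat.fib_mono hq.le
  have hinf : ({q | q.Prime} \ Set.Iic 3).Infinite :=
    Nat.infinite_setOfPred_prime.sdiff (Set.finite_Iic 3)
  refine (hinf.image (f := fun q ↦ (Nat.fib q).minFac) fun q hq r hr hqr ↦ ?_).mono ?_
  · exact eq_of_prime_dvd_fib (hprime (not_le.1 hq.2)) hq.1 hr.1 (Nat.minFac_dvd _)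
      (hqr.dvd.trans (Nat.minFac_dvd (Nat.fib r)))
  · rintro _ ⟨q, ⟨hq, hq3⟩, rfl⟩
    exact ⟨hprime (not_le.1 hq3), q, hq, not_le.1 hq3, Nat.minFac_dvd _⟩

theorem exists_odd_padicValInt_two_sub_fib {M : ℕ} (hM : M ≠ 0) :
    ∃ n p : ℕ, n % 500 = 3 ∧ ¬ 3 ∣ n ∧ p.Prime ∧ ¬ p ∣ M ∧
      Odd (padicValInt p (2 - (Nat.fib n : ℤ))) := by
  obtain ⟨p, ⟨hp, q, hq, hq3, hpq⟩, hpM⟩ :=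
    infinite_setOf_prime_dvd_fib_prime.exists_notMem_finset (6 * M).primeFactors
  have : Fact p.Prime := ⟨hp⟩
  have hp6M : ¬ p ∣ 6 * M := fun h ↦ hpM (Nat.mem_primeFactors.2 ⟨hp, h, by positivity⟩)
  have hp2 : p ≠ 2 := by rintro rfl; exact hp6M (by omega)
  have hp3 : p ≠ 3 := by rintro rfl; exact hp6M (by omega)
  have h3q : ¬ 3 ∣ q := fun h ↦ hq3.ne ((Nat.prime_dvd_prime_iff_eq Nat.prime_three hq).1 h)
  have h3p : ¬ 3 ∣ p := fun h ↦ hp3 ((Nat.prime_dvd_prime_iff_eq Nat.prime_three hp).1 h).symm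
  have hpfib {k : ℕ} (hk : q ∣ k) : (p : ℤ) ∣ Int.fib (250 * k) :=
    (Int.natCast_dvd_natCast.2 hpq).trans
      (Int.fib_dvd q _ ((Int.natCast_dvd_natCast.2 hk).mul_left 250))
  obtain ⟨k, hk0, hqk, h3k, hodd⟩ : ∃ k : ℕ, k ≠ 0 ∧ q ∣ k ∧ ¬ 3 ∣ k ∧
      Odd (padicValInt p (Int.fib (250 * k))) := by
    obtain h | h := odd_padicValInt_fib_or_odd_padicValInt_fib_mul_prime
      (show (250 * q : ℤ) ≠ 0 by have := hq.ne_zero; positivity) (hpfib dvd_rfl)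
    · exact ⟨q, hq.ne_zero, dvd_rfl, h3q, h⟩
    · refine ⟨q * p, mul_ne_zero hq.ne_zero hp.ne_zero, dvd_mul_right _ _,
        Nat.prime_three.not_dvd_mul h3q h3p, ?_⟩
      rwa [Nat.cast_mul, ← mul_assoc]
  refine ⟨2 * (250 * k) + 3, p, by omega, by omega, hp, fun h ↦ hp6M (h.mul_left 6), ?_⟩
  have hval := padicValInt_two_sub_fib hp2 (N := 250 * k)
    ((by decide : Even (250 : ℤ)).mul_right _) (by positivity) (hpfib hqk)
  rw [← Int.fib_natCast]
  push_cast
  rwa [hval]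

namespace IsAdmissible

variable {g l : ℤ} {c : ℂ}

theorem five_dvd_card_classGroup_adjoin (h : IsAdmissible g l)
    (hc : c ^ 2 = (-(g * (5 * g + 2 * l)) : ℤ)) : 5 ∣ Nat.card (ClassGroup (𝓞 ℚ⟮c⟯)) := by
  have hrank := finrank_adjoin_eq_two_of_sq_eq_intCast (neg_neg_of_pos h.mul_add_pos) hc
  have := numberField_adjoin_of_sq_eq_intCast hc
  exact h.five_dvd_card_classGroup_of_sq_eq hrank (adjoinSimpleGen_sq_eq_intCast hc)

theorem five_dvd_card_classGroup_adjoin_five_mul (h : IsAdmissible g l)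
    (hc : c ^ 2 = (-(5 * (g * (5 * g + 2 * l))) : ℤ)) :
    5 ∣ Nat.card (ClassGroup (𝓞 ℚ⟮c⟯)) := by
  have hrank := finrank_adjoin_eq_two_of_sq_eq_intCast (by linarith [h.mul_add_pos]) hc
  have := numberField_adjoin_of_sq_eq_intCast hc
  exact h.five_dvd_card_classGroup_of_sq_eq_five_mul hrank (adjoinSimpleGen_sq_eq_intCast hc)

end IsAdmissible

theorem stmt_2 :
    (∀ n : ℕ, (n % 500 = 3 ∨ n % 500 = 497) → ¬(3 ∣ n) →
      ∀ c c' : ℂ, c ^ 2 = ((2 - (Nat.fib n : ℤ) : ℤ) : ℂ) →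
        c' ^ 2 = ((5 * (2 - (Nat.fib n : ℤ)) : ℤ) : ℂ) →
        5 ∣ Nat.card (ClassGroup (NumberField.RingOfIntegers ℚ⟮c⟯)) ∧
        5 ∣ Nat.card (ClassGroup (NumberField.RingOfIntegers ℚ⟮c'⟯))) ∧
    {KK' : IntermediateField ℚ ℂ × IntermediateField ℚ ℂ |
      ∃ n : ℕ, (n % 500 = 3 ∨ n % 500 = 497) ∧ ¬(3 ∣ n) ∧
        ∃ c c' : ℂ, c ^ 2 = ((2 - (Nat.fib n : ℤ) : ℤ) : ℂ) ∧
          c' ^ 2 = ((5 * (2 - (Nat.fib n : ℤ)) : ℤ) : ℂ) ∧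
          KK'.1 = ℚ⟮c⟯ ∧ KK'.2 = ℚ⟮c'⟯}.Infinite := by
  constructor
  · intro n hn h3 c c' hc hc'
    obtain ⟨g, l, h, hgl⟩ := exists_isAdmissible hn h3
    rw [← neg_sub, hgl] at hc
    rw [← neg_sub, hgl, mul_neg] at hc'
    exact ⟨h.five_dvd_card_classGroup_adjoin hc, h.five_dvd_card_classGroup_adjoin_five_mul hc'⟩
  · refine Set.Infinite.of_image Prod.fst
      ((infinite_setOf_adjoin_sqrt (D := {d | ∃ n : ℕ, n % 500 = 3 ∧ ¬ 3 ∣ n ∧ d = 2 - Nat.fib n})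
        ?_ ?_).mono ?_)
    · rintro _ ⟨n, hn, h3, rfl⟩
      obtain ⟨g, l, h, hgl⟩ := exists_isAdmissible (.inl hn) h3
      linarith [h.mul_add_pos]
    · intro M hM
      obtain ⟨n, p, hn, h3, hp, hpM, hodd⟩ := exists_odd_padicValInt_two_sub_fib hM
      exact ⟨_, ⟨n, hn, h3, rfl⟩, p, hp, hpM, hodd⟩
    · rintro F ⟨_, ⟨n, hn, h3, rfl⟩, c, hc, rfl⟩
      obtain ⟨c', hc'⟩ := IsAlgClosed.exists_pow_nat_eq ((5 * (2 - Nat.fib n : ℤ) : ℤ) : ℂ) two_pos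
      exact ⟨(ℚ⟮c⟯, ℚ⟮c'⟯), ⟨n, .inl hn, h3, c, c', hc, hc', rfl, rfl⟩, rfl⟩
end

section
/- Let p be a prime with p ≡ 5 (mod 8), let ι be a primitive root modulo p, and let A, B be integers with p = A² + B², A ≡ −1 (mod 4), and B ≡ A·ι^{(p−1)/4} (mod p). Let ζ = exp(2πi/p) and, for j = 0, 1, 2, 3, set S_j = Σ ζ^{ι^k}, the sum over those k with 0 ≤ k ≤ p − 2 and k ≡ j (mod 4). Then, as identities of complex numbers: (S₀ − S₂)² = (A√p − p)/2, (S₁ − S₃)² = −(A√p + p)/2, and (S₀ − S₂)(S₁ − S₃) = B√p/2. -/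
/-!
Let `χ` be the character modulo `p` with `χ ι = i`. Its Gauss sum is
`g(χ) = (S₀ - S₂) + i (S₁ - S₃)`, and `g(χ⁻¹) = (S₀ - S₂) - i (S₁ - S₃)`, so the three identities
amount to `g(χ) g(χ⁻¹) = χ(-1) p = -p` and `g(χ)² = √p (A + B i)`. Since
`g(χ)² g(χ²) = χ(-1) p J(χ, χ²)`, the latter reduces to `J(χ, χ²) = -(A + B i)` and `g(χ²) = √p`.

The Jacobi sum is a Gaussian integer of norm `p` which is congruent to `-p` modulo `2 (i - 1)`.
Reduction modulo `p` along `i ↦ ι ^ ((p - 1) / 4)` turns it into `∑ x, x ^ n * (1 - x) ^ (2 * n)`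
with `n = (p - 1) / 4`, which vanishes because the degree `3 * n` is less than `p - 1`. These three
facts determine it.

The quadratic Gauss sum has the same square as `∏ 2 i sin (2πk / p)`, `1 ≤ k ≤ (p - 1) / 2`. Both
are values at `ζ` of integer polynomials, and the sign between them is read off modulo `p`: the
cyclotomic polynomial reduces to `(X - 1) ^ (p - 1)`, so the coefficients of
`(X - 1) ^ ((p - 1) / 2)` have to match.
-/

open Polynomial Finset

section FiniteField

variable {K : Type*} [Field K] [Fintype K]

lemma sum_eval_eq_neg_coeff_card_sub_one {f : K[X]} (hf : f.natDegree ≤ Fintype.card K - 1) :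
    ∑ x : K, f.eval x = -f.coeff (Fintype.card K - 1) := by
  classical
  have hq : Fintype.card K - 1 ≠ 0 := (Nat.sub_pos_of_lt Fintype.one_lt_card).ne'
  have sum_pow_card_sub_one : ∑ x : K, x ^ (Fintype.card K - 1) = -1 := by
    have hpow (x : K) : x ^ (Fintype.card K - 1) = 1 - if x = 0 then 1 else 0 := by
      split_ifs with hx
      · rw [hx, zero_pow hq, sub_self]
      · rw [FiniteField.pow_card_sub_one_eq_one x hx, sub_zero]
    simp [hpow]
  calc ∑ x : K, f.eval x
      = ∑ i ∈ range (Fintype.card K - 1 + 1), f.coeff i * ∑ x : K, x ^ i := by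
        simp_rw [eval_eq_sum_range' (Nat.lt_succ_of_le hf), mul_sum]
        exact sum_comm
    _ = f.coeff (Fintype.card K - 1) * ∑ x : K, x ^ (Fintype.card K - 1) := by
        rw [sum_range_succ, add_eq_right]
        refine sum_eq_zero fun i hi ↦ ?_
        rw [FiniteField.sum_pow_lt_card_sub_one _ i (mem_range.1 hi), mul_zero]
    _ = -f.coeff (Fintype.card K - 1) := by rw [sum_pow_card_sub_one, mul_neg_one]

variable {g : K} (hg : IsPrimitiveRoot g (Fintype.card K - 1))
include hg

lemma ne_zero_of_isPrimitiveRoot_card_sub_one : g ≠ 0 :=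
  (hg.isUnit (Nat.sub_pos_of_lt Fintype.one_lt_card).ne').ne_zero

lemma exists_pow_eq_of_isPrimitiveRoot_card_sub_one {x : K} (hx : x ≠ 0) :
    ∃ k < Fintype.card K - 1, g ^ k = x :=
  have : NeZero (Fintype.card K - 1) := ⟨(Nat.sub_pos_of_lt Fintype.one_lt_card).ne'⟩
  hg.eq_pow_of_pow_eq_one (FiniteField.pow_card_sub_one_eq_one x hx)

lemma sum_univ_eq_sum_range_pow {M : Type*} [AddCommMonoid M] {f : K → M} (hf : f 0 = 0) :
    ∑ x, f x = ∑ k ∈ range (Fintype.card K - 1), f (g ^ k) := by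
  classical
  rw [← sum_erase univ hf]
  refine (sum_bij (fun k _ ↦ g ^ k) ?_ ?_ ?_ fun _ _ ↦ rfl).symm
  · simp [ne_zero_of_isPrimitiveRoot_card_sub_one hg]
  · exact fun j hj k hk h ↦ hg.pow_inj (mem_range.1 hj) (mem_range.1 hk) h
  · intro x hx
    obtain ⟨k, hk, rfl⟩ := exists_pow_eq_of_isPrimitiveRoot_card_sub_one hg (ne_of_mem_erase hx)
    exact ⟨k, mem_range.2 hk, rfl⟩

lemma mem_zpowers_of_isPrimitiveRoot_card_sub_one (u : Kˣ) :
    u ∈ Subgroup.zpowers (Units.mk0 g (ne_zero_of_isPrimitiveRoot_card_sub_one hg)) := by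
  obtain ⟨k, -, hk⟩ := exists_pow_eq_of_isPrimitiveRoot_card_sub_one hg u.ne_zero
  exact ⟨k, Units.ext (by simpa using hk)⟩

lemma mulChar_ext_of_isPrimitiveRoot {R : Type*} [CommMonoidWithZero R] {χ φ : MulChar K R}
    (h : χ g = φ g) : χ = φ :=
  (MulChar.eq_iff (mem_zpowers_of_isPrimitiveRoot_card_sub_one hg) χ φ).2 h

lemma exists_mulChar_apply_eq {R : Type*} [CommMonoidWithZero R] {μ : R}
    (hμ : μ ^ (Fintype.card K - 1) = 1) : ∃ χ : MulChar K R, χ g = μ := by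
  classical
  have hq : Fintype.card K - 1 ≠ 0 := (Nat.sub_pos_of_lt Fintype.one_lt_card).ne'
  have hroot : Units.ofPowEqOne μ _ hμ hq ∈ rootsOfUnity (Fintype.card Kˣ) R := by
    rw [mem_rootsOfUnity, Fintype.card_units, Units.pow_ofPowEqOne]
  have hgen := mem_zpowers_of_isPrimitiveRoot_card_sub_one hg
  exact ⟨MulChar.ofRootOfUnity hroot hgen, MulChar.ofRootOfUnity_spec hroot hgen⟩

lemma quadraticChar_eq_neg_one_of_isPrimitiveRoot [DecidableEq K] (hK : ringChar K ≠ 2) :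
    quadraticChar K g = -1 := by
  refine (quadraticChar_dichotomy (ne_zero_of_isPrimitiveRoot_card_sub_one hg)).resolve_left
    fun h ↦ quadraticChar_ne_one hK (mulChar_ext_of_isPrimitiveRoot hg ?_)
  rw [h, MulChar.one_apply (ne_zero_of_isPrimitiveRoot_card_sub_one hg).isUnit]

end FiniteField

section Taylor

lemma coeff_card_prod_of_coeff_zero_eq_zero {ι R : Type*} [CommRing R] {s : Finset ι} {f : ι → R[X]}
    (hf : ∀ i ∈ s, (f i).coeff 0 = 0) : (∏ i ∈ s, f i).coeff #s = ∏ i ∈ s, (f i).coeff 1 := by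
  have hfactor : ∏ i ∈ s, f i = (∏ i ∈ s, (f i).divX) * X ^ #s := by
    rw [← prod_const, ← prod_mul_distrib]
    refine prod_congr rfl fun i hi ↦ ?_
    conv_lhs => rw [← divX_mul_X_add (f i), hf i hi, C_0, add_zero]
  simp only [hfactor, coeff_mul_X_pow', le_refl, if_true, Nat.sub_self, coeff_zero_prod, coeff_divX,
    zero_add]

lemma taylor_prod_coeff_card {ι R : Type*} [CommRing R] {s : Finset ι} {f : ι → R[X]} {r : R}
    (hf : ∀ i ∈ s, (f i).eval r = 0) :
    (taylor r (∏ i ∈ s, f i)).coeff #s = ∏ i ∈ s, (derivative (f i)).eval r := by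
  rw [← taylorAlgHom_apply, map_prod, coeff_card_prod_of_coeff_zero_eq_zero]
  · simp only [taylorAlgHom_apply, taylor_coeff_one]
  · simpa only [taylorAlgHom_apply, taylor_coeff_zero] using hf

lemma X_sub_one_pow_dvd_map_of_aeval_eq_zero {K : Type*} [Field K] [CharZero K] {p : ℕ}
    [Fact p.Prime] {ζ : K} (hζ : IsPrimitiveRoot ζ p) {f : ℤ[X]} (hf : aeval ζ f = 0) :
    (X - 1) ^ (p - 1) ∣ f.map (Int.castRingHom (ZMod p)) := by
  have hp : p.Prime := Fact.out
  have hdvd : cyclotomic p ℤ ∣ f := by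
    rw [cyclotomic_eq_minpoly hζ hp.pos]
    exact minpoly.isIntegrallyClosed_dvd (hζ.isIntegral hp.pos) hf
  have hcyc : cyclotomic p (ZMod p) = (X - 1) ^ (p - 1) := by
    simpa using cyclotomic_mul_prime_pow_eq (ZMod p) hp.not_dvd_one one_pos
  rw [← hcyc, ← map_cyclotomic p (Int.castRingHom (ZMod p))]
  exact Polynomial.map_dvd _ hdvd

lemma taylor_one_map_coeff_eq_zero_of_aeval_eq_zero {K : Type*} [Field K] [CharZero K] {p : ℕ}
    [Fact p.Prime] {ζ : K} (hζ : IsPrimitiveRoot ζ p) {f : ℤ[X]} (hf : aeval ζ f = 0) {m : ℕ}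
    (hm : m < p - 1) : (taylor 1 (f.map (Int.castRingHom (ZMod p)))).coeff m = 0 := by
  refine X_pow_dvd_iff.1 ?_ m hm
  simpa [taylorAlgHom_apply] using
    map_dvd (taylorAlgHom (1 : ZMod p)) (X_sub_one_pow_dvd_map_of_aeval_eq_zero hζ hf)

end Taylor

section QuadraticGaussSum

/-- The Fekete polynomial of `p`, whose value at a `p`-th root of unity is the quadratic Gauss
sum. -/
noncomputable def feketePoly (p : ℕ) [Fact p.Prime] : ℤ[X] :=
  ∑ j ∈ range p, C (legendreSym p j) * X ^ j

/-- The polynomial whose value at `exp (2πi / n)`, for `n` odd, is the product of the numbers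
`2 * I * sin (2πk / n)` with `1 ≤ k ≤ n / 2`. The factor `ζ ^ k - ζ ^ (-k)` is written with the
exponent `n - k` in place of `-k`, and `k` is shifted by one. -/
noncomputable def sineProductPoly (n : ℕ) : ℤ[X] :=
  ∏ k ∈ range (n / 2), (X ^ (k + 1) - X ^ (n - (k + 1)))

lemma aeval_sineProductPoly {R : Type*} [CommRing R] (ζ : R) (n : ℕ) :
    aeval ζ (sineProductPoly n) = ∏ k ∈ range (n / 2), (ζ ^ (k + 1) - ζ ^ (n - (k + 1))) := by
  simp only [sineProductPoly, map_prod, map_sub, map_pow, aeval_X]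

lemma aeval_sineProductPoly_sq {R : Type*} [CommRing R] [IsDomain R] {ζ : R} {n : ℕ} (hn : Odd n)
    (hζ : IsPrimitiveRoot ζ n) : (aeval ζ (sineProductPoly n)) ^ 2 = (-1) ^ (n / 2) * n := by
  obtain ⟨m, rfl⟩ := hn
  have hm : (2 * m + 1) / 2 = m := by omega
  have hζ2 : IsPrimitiveRoot (ζ ^ 2) (m + m + 1) := by
    rw [← two_mul]
    exact hζ.pow_of_coprime 2 (Nat.coprime_two_left.2 ⟨m, rfl⟩)
  have hfactor : ∀ k ∈ range m, (ζ ^ (k + 1) - ζ ^ (2 * m + 1 - (k + 1))) ^ 2 =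
      -1 * ((1 - (ζ ^ 2) ^ (k + 1)) * (1 - (ζ ^ 2) ^ (m + (m - 1 - k) + 1))) := by
    intro k hk
    have hk := mem_range.1 hk
    have hinv : ζ ^ (k + 1) * ζ ^ (2 * m + 1 - (k + 1)) = 1 := by
      rw [← pow_add, Nat.add_sub_cancel' (by omega), hζ.pow_eq_one]
    rw [show m + (m - 1 - k) + 1 = 2 * m + 1 - (k + 1) by omega, pow_right_comm ζ 2,
      pow_right_comm ζ 2]
    linear_combination (ζ ^ (k + 1) * ζ ^ (2 * m + 1 - (k + 1)) - 1) * hinv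
  have hprod := hζ2.prod_one_sub_pow_eq_order
  rw [prod_range_add, ← prod_range_reflect (fun k ↦ 1 - (ζ ^ 2) ^ (m + k + 1)),
    ← prod_mul_distrib] at hprod
  rw [aeval_sineProductPoly, hm, ← prod_pow, prod_congr rfl hfactor, prod_mul_distrib, prod_const,
    card_range, hprod]
  push_cast
  ring

lemma exp_pow_sub_exp_pow_sub {n k : ℕ} (hn : n ≠ 0) (hk : k ≤ n) :
    Complex.exp (2 * Real.pi * Complex.I / n) ^ k -
        Complex.exp (2 * Real.pi * Complex.I / n) ^ (n - k) =
      Complex.I * (2 * Real.sin (2 * Real.pi * k / n) : ℝ) := by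
  have hn' : (n : ℂ) ≠ 0 := Nat.cast_ne_zero.2 hn
  have hpow : Complex.exp (2 * Real.pi * Complex.I / n) ^ k =
      Complex.exp (2 * Real.pi * k / n * Complex.I) := by
    rw [← Complex.exp_nat_mul]
    ring_nf
  have hpow_sub : Complex.exp (2 * Real.pi * Complex.I / n) ^ (n - k) =
      Complex.exp (-(2 * Real.pi * k / n) * Complex.I) := by
    rw [← Complex.exp_nat_mul, Nat.cast_sub hk, ← Complex.exp_periodic (-_ * _)]
    congr 1
    field_simp
    ring
  rw [hpow, hpow_sub]
  push_cast
  rw [Complex.two_sin]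
  linear_combination (Complex.exp (-(2 * Real.pi * k / n) * Complex.I) -
    Complex.exp (2 * Real.pi * k / n * Complex.I)) * -Complex.I_sq

lemma aeval_exp_sineProductPoly {n : ℕ} (hn : Odd n) :
    aeval (Complex.exp (2 * Real.pi * Complex.I / n)) (sineProductPoly n) =
      Complex.I ^ (n / 2) * √(n : ℝ) := by
  set r : ℝ := ∏ k ∈ range (n / 2), 2 * Real.sin (2 * Real.pi * (k + 1 : ℕ) / n)
  have hr_pos : 0 < r := by
    refine prod_pos fun k hk ↦ mul_pos two_pos ?_
    have hn_pos : (0 : ℝ) < n := Nat.cast_pos.2 hn.pos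
    have hk : (2 * (k + 1 : ℕ) : ℝ) < n := by
      have := mem_range.1 hk
      have := Nat.odd_iff.1 hn
      exact_mod_cast (by omega : 2 * (k + 1) < n)
    refine Real.sin_pos_of_pos_of_lt_pi (by positivity) ?_
    rw [div_lt_iff₀ hn_pos, mul_comm 2 Real.pi, mul_assoc]
    gcongr
  have hval : aeval (Complex.exp (2 * Real.pi * Complex.I / n)) (sineProductPoly n) =
      Complex.I ^ (n / 2) * r := by
    rw [aeval_sineProductPoly, prod_congr rfl fun k hk ↦ exp_pow_sub_exp_pow_sub hn.pos.ne'
      (by have := mem_range.1 hk; omega), prod_mul_distrib, prod_const, card_range,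
      Complex.ofReal_prod]
  have hr_sq : r ^ 2 = n := by
    have hsq := aeval_sineProductPoly_sq hn (Complex.isPrimitiveRoot_exp n hn.pos.ne')
    rw [hval, mul_pow, ← pow_mul, mul_comm, pow_mul', Complex.I_sq, mul_comm] at hsq
    exact_mod_cast mul_left_cancel₀ (pow_ne_zero _ (neg_ne_zero.2 one_ne_zero)) hsq
  rw [hval, ← hr_sq, Real.sqrt_sq hr_pos.le]

lemma sum_range_natCast_zmod {M : Type*} [AddCommMonoid M] {n : ℕ} [NeZero n] (f : ZMod n → M) :
    ∑ j ∈ range n, f j = ∑ x, f x :=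
  sum_bij' (fun j _ ↦ j) (fun x _ ↦ x.val) (fun _ _ ↦ mem_univ _)
    (fun x _ ↦ mem_range.2 x.val_lt) (fun _ hj ↦ ZMod.val_cast_of_lt (mem_range.1 hj))
    (fun x _ ↦ ZMod.natCast_zmod_val x) (fun _ _ ↦ rfl)

lemma stdAddChar_natCast {n : ℕ} [NeZero n] (j : ℕ) :
    ZMod.stdAddChar (j : ZMod n) = Complex.exp (2 * Real.pi * Complex.I / n) ^ j := by
  rw [← Int.cast_natCast, ZMod.stdAddChar_coe, ← Complex.exp_nat_mul]
  push_cast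
  ring_nf

variable {p : ℕ} [Fact p.Prime]

lemma aeval_exp_feketePoly :
    aeval (Complex.exp (2 * Real.pi * Complex.I / p)) (feketePoly p) =
      gaussSum ((quadraticChar (ZMod p)).ringHomComp (Int.castRingHom ℂ)) ZMod.stdAddChar := by
  rw [gaussSum, ← sum_range_natCast_zmod, feketePoly, map_sum]
  refine sum_congr rfl fun j _ ↦ ?_
  simp [stdAddChar_natCast, legendreSym]

lemma aeval_exp_feketePoly_sq (hp : p ≠ 2) :
    (aeval (Complex.exp (2 * Real.pi * Complex.I / p)) (feketePoly p)) ^ 2 =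
      (-1) ^ (p / 2) * p := by
  have hchar : ringChar (ZMod p) ≠ 2 := by rwa [ZMod.ringChar_zmod_n]
  have hne : (quadraticChar (ZMod p)).ringHomComp (Int.castRingHom ℂ) ≠ 1 :=
    (MulChar.ringHomComp_ne_one_iff Int.cast_injective).2 (quadraticChar_ne_one hchar)
  rw [aeval_exp_feketePoly, gaussSum_sq hne ((quadraticChar_isQuadratic _).comp _)
    (ZMod.isPrimitive_stdAddChar p), MulChar.ringHomComp_apply, quadraticChar_neg_one hchar,
    ZMod.card, ZMod.χ₄_eq_neg_one_pow (Nat.odd_iff.1 ((Fact.out : p.Prime).odd_of_ne_two hp))]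
  simp

lemma sum_legendreSym_mul_choose_half_mul_factorial (hp : p ≠ 2) :
    (∑ j ∈ range p, (legendreSym p j : ZMod p) * (j.choose (p / 2) : ZMod p)) *
      ((p / 2).factorial : ZMod p) = -1 := by
  have hodd := (Fact.out : p.Prime).odd_of_ne_two hp
  set f : (ZMod p)[X] := X ^ (p / 2) * descPochhammer (ZMod p) (p / 2)
  have hmonic : f.Monic := (monic_X_pow _).mul (monic_descPochhammer _ _)
  have hdeg : f.natDegree = Fintype.card (ZMod p) - 1 := by
    rw [(monic_X_pow _).natDegree_mul (monic_descPochhammer _ _), natDegree_X_pow,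
      descPochhammer_natDegree, ZMod.card]
    have := Nat.odd_iff.1 hodd
    omega
  calc (∑ j ∈ range p, (legendreSym p j : ZMod p) * (j.choose (p / 2) : ZMod p)) *
        ((p / 2).factorial : ZMod p)
      = ∑ j ∈ range p, f.eval (j : ZMod p) := by
        rw [sum_mul]
        refine sum_congr rfl fun j _ ↦ ?_
        rw [eval_mul, eval_pow, eval_X, descPochhammer_eval_eq_descFactorial, legendreSym.eq_pow,
          Nat.descFactorial_eq_factorial_mul_choose]
        push_cast
        ring
    _ = -f.coeff (Fintype.card (ZMod p) - 1) := by
        rw [sum_range_natCast_zmod (fun x ↦ f.eval x), sum_eval_eq_neg_coeff_card_sub_one hdeg.le]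
    _ = -1 := by rw [← hdeg, hmonic.coeff_natDegree]

lemma taylor_one_feketePoly_coeff (m : ℕ) :
    (taylor 1 ((feketePoly p).map (Int.castRingHom (ZMod p)))).coeff m =
      ∑ j ∈ range p, (legendreSym p j : ZMod p) * (j.choose m : ZMod p) := by
  rw [feketePoly, Polynomial.map_sum, map_sum, finsetSum_coeff]
  refine sum_congr rfl fun j _ ↦ ?_
  rw [Polynomial.map_mul, Polynomial.map_C, Polynomial.map_pow, map_X, taylor_mul, taylor_C,
    taylor_X_pow, coeff_C_mul, C_1, coeff_X_add_one_pow, eq_intCast]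

lemma taylor_one_sineProductPoly_coeff :
    (taylor 1 ((sineProductPoly p).map (Int.castRingHom (ZMod p)))).coeff (p / 2) =
      2 ^ (p / 2) * ((p / 2).factorial : ZMod p) := by
  have hderiv : ∀ k ∈ range (p / 2), (derivative ((X ^ (k + 1) - X ^ (p - (k + 1)) : ℤ[X]).map
      (Int.castRingHom (ZMod p)))).eval 1 = 2 * ((k + 1 : ℕ) : ZMod p) := by
    intro k hk
    have hk := mem_range.1 hk
    simp only [Polynomial.map_sub, Polynomial.map_pow, map_X, derivative_X_pow, derivative_sub,
      eval_sub, eval_mul, eval_pow, eval_X, eval_natCast, map_natCast, one_pow, mul_one]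
    rw [Nat.cast_sub (by omega), ZMod.natCast_self]
    ring
  rw [sineProductPoly, Polynomial.map_prod]
  nth_rewrite 2 [← card_range (p / 2)]
  rw [taylor_prod_coeff_card (fun k _ ↦ by simp), prod_congr rfl hderiv, prod_mul_distrib,
    prod_const, card_range, ← Nat.cast_prod, prod_range_add_one_eq_factorial]

lemma factorial_half_sq (hp : p ≠ 2) :
    ((p / 2).factorial : ZMod p) ^ 2 = -(-1) ^ (p / 2) := by
  obtain ⟨m, hm⟩ := (Fact.out : p.Prime).odd_of_ne_two hp
  have hm2 : p / 2 = m := by omega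
  have hupper : ∏ k ∈ range m, ((m + k + 1 : ℕ) : ZMod p) = (-1) ^ m * (m.factorial : ZMod p) := by
    rw [← prod_range_reflect, ← prod_range_add_one_eq_factorial, Nat.cast_prod,
      ← card_range m, ← prod_const, card_range, ← prod_mul_distrib]
    refine prod_congr rfl fun k hk ↦ ?_
    have hsum : (m + (m - 1 - k) + 1) + (k + 1) = p := by
      have := mem_range.1 hk
      omega
    have hcast := congrArg (Nat.cast : ℕ → ZMod p) hsum
    rw [ZMod.natCast_self, Nat.cast_add] at hcast
    linear_combination hcast
  have hwilson := ZMod.wilsons_lemma p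
  rw [show p - 1 = m + m by omega, ← prod_range_add_one_eq_factorial, prod_range_add, Nat.cast_mul,
    Nat.cast_prod (fun k ↦ m + k + 1), hupper, prod_range_add_one_eq_factorial] at hwilson
  have hsign : ((-1) ^ m * (-1) ^ m : ZMod p) = 1 := by rw [← mul_pow]; simp
  rw [hm2]
  linear_combination (-1) ^ m * hwilson - (m.factorial : ZMod p) ^ 2 * hsign

lemma eq_legendreSym_two_mul_of_aeval_feketePoly_eq {K : Type*} [Field K] [CharZero K] {ζ : K}
    (hp : p ≠ 2) (hζ : IsPrimitiveRoot ζ p) {ε : ℤ} (hε : ε = 1 ∨ ε = -1)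
    (h : aeval ζ (feketePoly p) = ε * aeval ζ (sineProductPoly p)) :
    ε = legendreSym p 2 * (-1) ^ (p / 2) := by
  have hp3 : 2 < p := lt_of_le_of_ne (Fact.out : p.Prime).two_le hp.symm
  have hchar : ringChar (ZMod p) ≠ 2 := by rwa [ZMod.ringChar_zmod_n]
  have hcoeff := taylor_one_map_coeff_eq_zero_of_aeval_eq_zero hζ
    (f := feketePoly p - C ε * sineProductPoly p) (by simp [h]) (m := p / 2) (by omega)
  rw [Polynomial.map_sub, Polynomial.map_mul, map_C, map_sub, taylor_mul, taylor_C, coeff_sub,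
    coeff_C_mul, taylor_one_feketePoly_coeff, taylor_one_sineProductPoly_coeff,
    eq_intCast] at hcoeff
  have htwo : (legendreSym p 2 : ZMod p) = 2 ^ (p / 2) := by
    rw [legendreSym.eq_pow, Int.cast_ofNat]
  have htwo_ne : ((2 : ℤ) : ZMod p) ≠ 0 := by
    rw [Int.cast_ofNat]
    exact Ring.two_ne_zero hchar
  have htwo_sq : (legendreSym p 2 : ZMod p) ^ 2 = 1 := by
    exact_mod_cast congrArg (Int.cast : ℤ → ZMod p) (legendreSym.sq_one p htwo_ne)
  have hsign_sq : ((-1) ^ (p / 2) * (-1) ^ (p / 2) : ZMod p) = 1 := by rw [← mul_pow]; simp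
  have hmul : (ε * legendreSym p 2 * (-1) ^ (p / 2) : ZMod p) = 1 := by
    rw [← htwo] at hcoeff
    linear_combination (ε * legendreSym p 2 : ZMod p) * factorial_half_sq hp +
      ((p / 2).factorial : ZMod p) * hcoeff - sum_legendreSym_mul_choose_half_mul_factorial hp
  have hcast : (ε : ZMod p) = ((legendreSym p 2 * (-1) ^ (p / 2) : ℤ) : ZMod p) := by
    push_cast
    linear_combination (legendreSym p 2 * (-1) ^ (p / 2) : ZMod p) * hmul -
      (ε : ZMod p) * hsign_sq - (ε : ZMod p) * ((-1) ^ (p / 2) * (-1) ^ (p / 2)) * htwo_sq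
  refine Int.cast_injOn_of_ringChar_ne_two hchar ?_ ?_ hcast
  · rcases hε with rfl | rfl <;> simp
  · rcases legendreSym.eq_one_or_neg_one p htwo_ne with h2 | h2 <;>
      rcases neg_one_pow_eq_or ℤ (p / 2) with hN | hN <;> simp [h2, hN]

-- `legendreSym p 2 * (-I) ^ (p / 2)` is `1` if `p ≡ 1 [MOD 4]` and `I` if `p ≡ 3 [MOD 4]`.
theorem gaussSum_quadraticChar_stdAddChar (hp : p ≠ 2) :
    gaussSum ((quadraticChar (ZMod p)).ringHomComp (Int.castRingHom ℂ)) ZMod.stdAddChar =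
      legendreSym p 2 * (-Complex.I) ^ (p / 2) * √(p : ℝ) := by
  have hodd := (Fact.out : p.Prime).odd_of_ne_two hp
  have hζ := Complex.isPrimitiveRoot_exp p hodd.pos.ne'
  obtain ⟨ε, hε, h⟩ : ∃ ε : ℤ, (ε = 1 ∨ ε = -1) ∧
      aeval (Complex.exp (2 * Real.pi * Complex.I / p)) (feketePoly p) =
        ε * aeval (Complex.exp (2 * Real.pi * Complex.I / p)) (sineProductPoly p) := by
    rcases sq_eq_sq_iff_eq_or_eq_neg.1
      ((aeval_exp_feketePoly_sq hp).trans (aeval_sineProductPoly_sq hodd hζ).symm) with h | h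
    · exact ⟨1, .inl rfl, by simpa using h⟩
    · exact ⟨-1, .inr rfl, by simpa using h⟩
  rw [← aeval_exp_feketePoly, h, eq_legendreSym_two_mul_of_aeval_feketePoly_eq hp hζ hε h,
    aeval_exp_sineProductPoly hodd, neg_pow]
  push_cast
  ring

end QuadraticGaussSum

section CharacterSums

variable {F R : Type*} [Field F] [Fintype F] [CommRing R] [IsDomain R]

lemma apply_sub_one_mul_apply_sub_one_dvd_jacobiSum_add_card {g : F}
    (hg : IsPrimitiveRoot g (Fintype.card F - 1)) {χ φ : MulChar F R} (hχ : χ ≠ 1) (hφ : φ ≠ 1) :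
    (χ g - 1) * (φ g - 1) ∣ jacobiSum χ φ + Fintype.card F := by
  have hsum : jacobiSum χ φ + Fintype.card F = ∑ x, (χ x - 1) * (φ (1 - x) - 1) := by
    have hφ_sum : ∑ x, φ (1 - x) = 0 :=
      ((Equiv.subLeft 1).sum_comp φ).trans (MulChar.sum_eq_zero_of_ne_one hφ)
    simp only [sub_mul, mul_sub, one_mul, mul_one, sum_sub_distrib, hφ_sum,
      MulChar.sum_eq_zero_of_ne_one hχ, sum_const, card_univ, nsmul_eq_mul, jacobiSum]
    ring
  have hdvd (θ : MulChar F R) {x : F} (hx : x ≠ 0) : θ g - 1 ∣ θ x - 1 := by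
    obtain ⟨k, -, rfl⟩ := exists_pow_eq_of_isPrimitiveRoot_card_sub_one hg hx
    rw [map_pow]
    exact sub_one_dvd_pow_sub_one _ k
  rw [hsum]
  refine dvd_sum fun x _ ↦ ?_
  rcases eq_or_ne x 0 with rfl | hx0
  · simp
  rcases eq_or_ne x 1 with rfl | hx1
  · simp
  exact mul_dvd_mul (hdvd χ hx0) (hdvd φ (sub_ne_zero.2 hx1.symm))

lemma gaussSum_mul_gaussSum_inv {χ : MulChar F R} (hχ : χ ≠ 1) {ψ : AddChar F R}
    (hψ : ψ.IsPrimitive) :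
    gaussSum χ ψ * gaussSum χ⁻¹ ψ = χ (-1) * Fintype.card F := by
  have hinv := mul_gaussSum_inv_eq_gaussSum χ⁻¹ ψ
  rw [MulChar.inv_apply', inv_neg_one] at hinv
  rw [← hinv, mul_left_comm, gaussSum_mul_gaussSum_eq_card hχ hψ]

lemma gaussSum_sq_mul_gaussSum_sq_of_pow_four_eq_one {χ : MulChar F R} (hχ : χ ≠ 1)
    (hχ4 : χ ^ 4 = 1) {ψ : AddChar F R} (hψ : ψ.IsPrimitive) :
    gaussSum χ ψ ^ 2 * gaussSum (χ ^ 2) ψ = χ (-1) * Fintype.card F * jacobiSum χ (χ ^ 2) := by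
  have hcube : χ * χ ^ 2 = χ⁻¹ := by
    rw [eq_inv_iff_mul_eq_one, ← pow_succ', ← pow_succ, hχ4]
  have hjacobi := jacobiSum_mul_nontrivial (hcube.trans_ne (inv_ne_one.2 hχ)) ψ
  rw [hcube] at hjacobi
  linear_combination -gaussSum χ ψ * hjacobi +
    jacobiSum χ (χ ^ 2) * gaussSum_mul_gaussSum_inv hχ hψ

lemma mulChar_apply_eq_pow {K : Type*} [Field K] [Fintype K] {g : K}
    (hg : IsPrimitiveRoot g (Fintype.card K - 1)) {χ : MulChar K K} {m : ℕ} (hm : m ≠ 0)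
    (hχ : χ g = g ^ m) (x : K) : χ x = x ^ m := by
  rcases eq_or_ne x 0 with rfl | hx
  · rw [MulChar.map_zero, zero_pow hm]
  · obtain ⟨k, -, rfl⟩ := exists_pow_eq_of_isPrimitiveRoot_card_sub_one hg hx
    rw [map_pow, hχ, pow_right_comm]

lemma jacobiSum_eq_zero_of_apply_eq_pow {χ φ : MulChar F F} {m n : ℕ}
    (hχ : ∀ x, χ x = x ^ m) (hφ : ∀ x, φ x = x ^ n) (hmn : m + n < Fintype.card F - 1) :
    jacobiSum χ φ = 0 := by
  set f : F[X] := X ^ m * (1 - X) ^ n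
  have hdeg : f.natDegree ≤ m + n := by
    refine natDegree_mul_le.trans (add_le_add (natDegree_X_pow_le m) ?_)
    simpa using natDegree_pow_le_of_le n (natDegree_sub_le (1 : F[X]) X)
  calc jacobiSum χ φ = ∑ x, f.eval x := by simp [jacobiSum, hχ, hφ, f]
    _ = 0 := by
        rw [sum_eval_eq_neg_coeff_card_sub_one (hdeg.trans hmn.le),
          coeff_eq_zero_of_natDegree_lt (hdeg.trans_lt hmn), neg_zero]

lemma norm_jacobiSum_gaussianInt {χ φ : MulChar F GaussianInt} (hχ : χ ≠ 1) (hφ : φ ≠ 1)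
    (hχφ : χ * φ ≠ 1) : (jacobiSum χ φ).norm = Fintype.card F := by
  have hchar : ringChar ℂ ≠ ringChar F := by
    rw [ringChar.eq_zero]
    exact (CharP.ringChar_ne_zero_of_finite F).symm
  have hconj (θ : MulChar F GaussianInt) : (θ.ringHomComp GaussianInt.toComplex)⁻¹ =
      (θ.ringHomComp GaussianInt.toComplex).ringHomComp (starRingEnd ℂ) :=
    (MulChar.star_eq_inv _).symm
  have hinj := GaussianInt.toComplex_injective
  have hmul := jacobiSum_mul_jacobiSum_inv hchar ((MulChar.ringHomComp_ne_one_iff hinj).2 hχ)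
    ((MulChar.ringHomComp_ne_one_iff hinj).2 hφ)
    (by rwa [← MulChar.ringHomComp_mul, MulChar.ringHomComp_ne_one_iff hinj])
  rw [hconj, hconj, jacobiSum_ringHomComp _ _ (starRingEnd ℂ), jacobiSum_ringHomComp,
    Complex.mul_conj, ← GaussianInt.intCast_complex_norm] at hmul
  exact_mod_cast hmul

end CharacterSums

section QuarticJacobiSum

lemma eq_or_eq_neg_of_sq_add_sq_eq {n A B a b : ℤ} (hAB : A ^ 2 + B ^ 2 = n)
    (hab : a ^ 2 + b ^ 2 = n) (hdvd : n ∣ A * b - a * B) (hne : A * a + B * b ≠ 0) :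
    A = a ∧ B = b ∨ A = -a ∧ B = -b := by
  have brahmagupta : (A * a + B * b) ^ 2 + (A * b - a * B) ^ 2 = n ^ 2 := by
    linear_combination (a ^ 2 + b ^ 2) * hAB + n * hab
  have hdet : A * b - a * B = 0 := by
    refine Int.eq_zero_of_abs_lt_dvd hdvd (abs_lt_of_sq_lt_sq ?_ (by nlinarith))
    linarith [pow_pos (abs_pos.2 hne) 2, sq_abs (A * a + B * b)]
  have hsq : (A * a + B * b) ^ 2 = n ^ 2 := by simpa [hdet] using brahmagupta
  have hn : n ≠ 0 := by
    rintro rfl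
    exact hne (by simpa using hsq)
  have hAn : A * n = a * (A * a + B * b) := by linear_combination b * hdet - A * hab
  have hBn : B * n = b * (A * a + B * b) := by linear_combination -a * hdet - B * hab
  rcases sq_eq_sq_iff_eq_or_eq_neg.1 hsq with h | h <;> rw [h] at hAn hBn
  · exact .inl ⟨mul_right_cancel₀ hn hAn, mul_right_cancel₀ hn hBn⟩
  · exact .inr ⟨mul_right_cancel₀ hn (by linarith), mul_right_cancel₀ hn (by linarith)⟩

lemma mulChar_powers_ne_one_of_sq_apply_eq_neg_one {M R : Type*} [CommMonoid M] [CommRing R]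
    [NeZero (2 : R)] {θ : MulChar M R} {g : M} (hθ : θ g ^ 2 = -1) :
    θ ≠ 1 ∧ θ ^ 2 ≠ 1 ∧ θ * θ ^ 2 ≠ 1 := by
  have hne : (-1 : R) ≠ 1 := fun h ↦ two_ne_zero (α := R) (by linear_combination -h)
  have hg : IsUnit g := by
    by_contra h
    rw [θ.map_nonunit h, zero_pow two_ne_zero] at hθ
    exact hne (by linear_combination -2 * hθ)
  have hsq : θ ^ 2 ≠ 1 := by
    intro h
    apply hne
    rw [← hθ, ← MulChar.pow_apply' _ two_ne_zero, h, MulChar.one_apply hg]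
  refine ⟨?_, hsq, fun h ↦ ?_⟩
  · rintro rfl
    exact hsq (one_pow 2)
  · have hcube := congrArg (fun φ : MulChar M R ↦ φ g) h
    simp only [MulChar.mul_apply, MulChar.pow_apply' _ two_ne_zero, hθ,
      MulChar.one_apply hg] at hcube
    exact hne (by linear_combination (1 - θ g) * hcube - hθ)

variable {K : Type*} [Field K] [Fintype K] {g : K} {χ : MulChar K GaussianInt}

lemma mulChar_pow_four_eq_one {R : Type*} [CommMonoidWithZero R] {θ : MulChar K R}
    (hg : IsPrimitiveRoot g (Fintype.card K - 1)) (hθ : θ g ^ 4 = 1) : θ ^ 4 = 1 := by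
  refine mulChar_ext_of_isPrimitiveRoot hg ?_
  rw [MulChar.pow_apply' _ four_ne_zero, hθ,
    MulChar.one_apply (ne_zero_of_isPrimitiveRoot_card_sub_one hg).isUnit]

lemma mulChar_sq_eq_quadraticChar [DecidableEq K] {R : Type*} [CommRing R] {θ : MulChar K R}
    (hg : IsPrimitiveRoot g (Fintype.card K - 1)) (hK : ringChar K ≠ 2) (hθ : θ g ^ 2 = -1) :
    θ ^ 2 = (quadraticChar K).ringHomComp (Int.castRingHom R) := by
  refine mulChar_ext_of_isPrimitiveRoot hg ?_
  rw [MulChar.pow_apply' _ two_ne_zero, hθ, MulChar.ringHomComp_apply,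
    quadraticChar_eq_neg_one_of_isPrimitiveRoot hg hK, map_neg, map_one]

lemma pow_card_sub_one_div_four_sq (hg : IsPrimitiveRoot g (Fintype.card K - 1))
    (hK : Fintype.card K % 4 = 1) : (g ^ ((Fintype.card K - 1) / 4)) ^ 2 = -1 := by
  have := Fintype.one_lt_card (α := K)
  rw [← pow_mul]
  exact (hg.pow (by omega) (by omega)).eq_neg_one_of_two_right

lemma mulChar_apply_neg_one_eq_neg_one {R : Type*} [CommRing R] {θ : MulChar K R}
    (hg : IsPrimitiveRoot g (Fintype.card K - 1)) (hK : Fintype.card K % 8 = 5)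
    (hθ : θ g ^ 2 = -1) : θ (-1) = -1 := by
  rw [← pow_card_sub_one_div_four_sq hg (by omega), map_pow, map_pow, pow_right_comm, hθ,
    Odd.neg_one_pow (Nat.odd_iff.2 (by omega))]

lemma gaussianInt_sqrtd_sq : (Zsqrtd.sqrtd : GaussianInt) ^ 2 = -1 := by
  rw [sq, Zsqrtd.dmuld, Int.cast_neg, Int.cast_one]

lemma re_sq_add_im_sq_jacobiSum_mulChar_sq (hχ : χ g ^ 2 = -1) :
    (jacobiSum χ (χ ^ 2)).re ^ 2 + (jacobiSum χ (χ ^ 2)).im ^ 2 = Fintype.card K := by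
  obtain ⟨hχ1, hχ2, hχ3⟩ := mulChar_powers_ne_one_of_sq_apply_eq_neg_one hχ
  have hnorm := norm_jacobiSum_gaussianInt hχ1 hχ2 hχ3
  rw [Zsqrtd.norm_def] at hnorm
  linear_combination hnorm

lemma jacobiSum_mulChar_sq_re_mod_four_and_im_mod_two (hg : IsPrimitiveRoot g (Fintype.card K - 1))
    (hK : Fintype.card K % 8 = 5) (hχ : χ g = Zsqrtd.sqrtd) :
    (jacobiSum χ (χ ^ 2)).re % 4 = 1 ∧ (jacobiSum χ (χ ^ 2)).im % 2 = 0 := by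
  have hχ_sq : χ g ^ 2 = -1 := by rw [hχ, gaussianInt_sqrtd_sq]
  obtain ⟨hχ1, hχ2, -⟩ := mulChar_powers_ne_one_of_sq_apply_eq_neg_one hχ_sq
  obtain ⟨z, hz⟩ := apply_sub_one_mul_apply_sub_one_dvd_jacobiSum_add_card hg hχ1 hχ2
  have hnorm := re_sq_add_im_sq_jacobiSum_mulChar_sq hχ_sq
  rw [MulChar.pow_apply' _ two_ne_zero, hχ_sq, hχ] at hz
  have hre : (jacobiSum χ (χ ^ 2)).re + Fintype.card K = 2 * z.re + 2 * z.im := by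
    simpa using congrArg Zsqrtd.re hz
  have him : (jacobiSum χ (χ ^ 2)).im = 2 * z.im + -(2 * z.re) := by
    simpa using congrArg Zsqrtd.im hz
  have hre_odd : Odd (jacobiSum χ (χ ^ 2)).re := Int.odd_iff.2 (by omega)
  have hsum_odd : (z.re + z.im) % 2 = 1 := by
    by_contra hsum_even
    obtain ⟨v, hv⟩ : (4 : ℤ) ∣ (jacobiSum χ (χ ^ 2)).im := by omega
    have hre_sq := Int.eight_dvd_sq_sub_one_of_odd hre_odd
    rw [hv] at hnorm
    have hcard_mod : (Fintype.card K : ℤ) % 8 = 1 := by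
      have him_sq : (4 * v) ^ 2 = 8 * (2 * v ^ 2) := by ring
      omega
    omega
  omega

lemma jacobiSum_mulChar_sq_im_eq_re_mul_pow (hg : IsPrimitiveRoot g (Fintype.card K - 1))
    (hK : Fintype.card K % 8 = 5) (hχ : χ g = Zsqrtd.sqrtd) :
    ((jacobiSum χ (χ ^ 2)).im : K) =
      (jacobiSum χ (χ ^ 2)).re * g ^ ((Fintype.card K - 1) / 4) := by
  set m := (Fintype.card K - 1) / 4
  have hsq := pow_card_sub_one_div_four_sq hg (by omega)
  let f : GaussianInt →+* K := Zsqrtd.lift ⟨g ^ m, by simpa [sq] using hsq⟩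
  have hf (z : GaussianInt) : f z = z.re + z.im * g ^ m := rfl
  have hfχ (x : K) : χ.ringHomComp f x = x ^ m :=
    mulChar_apply_eq_pow hg (by omega) (by rw [MulChar.ringHomComp_apply, hχ, hf]; simp) x
  have hfχ2 (x : K) : (χ ^ 2).ringHomComp f x = x ^ (m * 2) := by
    rw [← MulChar.ringHomComp_pow, MulChar.pow_apply' _ two_ne_zero, hfχ, pow_mul]
  have hzero := jacobiSum_eq_zero_of_apply_eq_pow hfχ hfχ2 (by omega)
  rw [jacobiSum_ringHomComp, hf] at hzero
  linear_combination -g ^ m * hzero + (jacobiSum χ (χ ^ 2)).im * hsq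

end QuarticJacobiSum

section GaussSum

variable {p : ℕ} [Fact p.Prime] {g : ZMod p}

theorem jacobiSum_mulChar_sq_eq (hp : p % 8 = 5)
    (hg : IsPrimitiveRoot g (Fintype.card (ZMod p) - 1)) {χ : MulChar (ZMod p) GaussianInt}
    (hχ : χ g = Zsqrtd.sqrtd) {A B : ℤ} (hAB : A ^ 2 + B ^ 2 = p) (hA : A ≡ -1 [ZMOD 4])
    (hB : (B : ZMod p) = A * g ^ ((p - 1) / 4)) : jacobiSum χ (χ ^ 2) = ⟨-A, -B⟩ := by
  have hcard : Fintype.card (ZMod p) % 8 = 5 := by rwa [ZMod.card]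
  obtain ⟨hre, him⟩ := jacobiSum_mulChar_sq_re_mod_four_and_im_mod_two hg hcard hχ
  have hnorm := re_sq_add_im_sq_jacobiSum_mulChar_sq (χ := χ) (g := g)
    (by rw [hχ, gaussianInt_sqrtd_sq])
  have hslope := jacobiSum_mulChar_sq_im_eq_re_mul_pow hg hcard hχ
  rw [ZMod.card] at hnorm hslope
  set J := jacobiSum χ (χ ^ 2)
  have hA4 : A % 4 = 3 := hA
  have hdvd : (p : ℤ) ∣ A * J.im - J.re * B := by
    rw [← ZMod.intCast_zmod_eq_zero_iff_dvd]
    push_cast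
    rw [hslope, hB]
    ring
  have hA_odd : Odd A := Int.odd_iff.2 (by omega)
  have hre_odd : Odd J.re := Int.odd_iff.2 (by omega)
  have him_even : Even J.im := Int.even_iff.2 him
  have hne : A * J.re + B * J.im ≠ 0 := by
    intro h
    have hodd : Odd (A * J.re + B * J.im) := (hA_odd.mul hre_odd).add_even (him_even.mul_left B)
    simp [h] at hodd
  rcases eq_or_eq_neg_of_sq_add_sq_eq hAB hnorm hdvd hne with ⟨h, -⟩ | ⟨h, h'⟩
  · omega
  · exact Zsqrtd.ext (by simp [h]) (by simp [h'])

lemma gaussSum_quadraticChar_stdAddChar_of_mod_eight_eq_five (hp : p % 8 = 5) :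
    gaussSum ((quadraticChar (ZMod p)).ringHomComp (Int.castRingHom ℂ)) ZMod.stdAddChar =
      √(p : ℝ) := by
  have hp2 : p ≠ 2 := by rintro rfl; norm_num at hp
  have htwo : legendreSym p 2 = -1 := by
    rw [legendreSym.at_two hp2, ZMod.χ₈_nat_eq_if_mod_eight]
    simp [hp, Nat.odd_iff.1 ((Fact.out : p.Prime).odd_of_ne_two hp2)]
  have hI : (-Complex.I) ^ (p / 2) = -1 := by
    rw [show p / 2 = 2 * (p / 4) by omega, pow_mul, neg_sq, Complex.I_sq,
      Odd.neg_one_pow (Nat.odd_iff.2 (by omega))]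
  rw [gaussSum_quadraticChar_stdAddChar hp2, htwo, hI]
  simp

lemma ofReal_sqrt_natCast_sq (n : ℕ) : (√(n : ℝ) : ℂ) ^ 2 = n := by
  rw [← Complex.ofReal_pow, Real.sq_sqrt n.cast_nonneg, Complex.ofReal_natCast]

lemma ofReal_sqrt_natCast_ne_zero {n : ℕ} (hn : n ≠ 0) : (√(n : ℝ) : ℂ) ≠ 0 :=
  Complex.ofReal_ne_zero.2 (Real.sqrt_ne_zero'.2 (Nat.cast_pos.2 (Nat.pos_of_ne_zero hn)))

theorem gaussSum_sq_eq_of_apply_eq_I (hp : p % 8 = 5)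
    (hg : IsPrimitiveRoot g (Fintype.card (ZMod p) - 1)) {χ : MulChar (ZMod p) ℂ}
    (hχ : χ g = Complex.I) {A B : ℤ} (hAB : A ^ 2 + B ^ 2 = p) (hA : A ≡ -1 [ZMOD 4])
    (hB : (B : ZMod p) = A * g ^ ((p - 1) / 4)) :
    gaussSum χ ZMod.stdAddChar ^ 2 = √(p : ℝ) * (A + B * Complex.I) := by
  have hcard : Fintype.card (ZMod p) % 8 = 5 := by rwa [ZMod.card]
  have hχ_sq : χ g ^ 2 = -1 := by rw [hχ, Complex.I_sq]
  have hchar : ringChar (ZMod p) ≠ 2 := by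
    rw [ZMod.ringChar_zmod_n]
    rintro rfl
    norm_num at hp
  have hjacobi : jacobiSum χ (χ ^ 2) = -(A + B * Complex.I) := by
    have hsqrtd : (Zsqrtd.sqrtd : GaussianInt) ^ (Fintype.card (ZMod p) - 1) = 1 := by
      rw [show Fintype.card (ZMod p) - 1 = 2 * (2 * ((Fintype.card (ZMod p) - 1) / 4)) by omega,
        pow_mul, gaussianInt_sqrtd_sq, pow_mul, neg_one_sq, one_pow]
    obtain ⟨θ, hθ⟩ := exists_mulChar_apply_eq hg hsqrtd
    have hχθ : χ = θ.ringHomComp GaussianInt.toComplex :=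
      mulChar_ext_of_isPrimitiveRoot hg (by simp [hχ, hθ, GaussianInt.toComplex_def])
    rw [hχθ, MulChar.ringHomComp_pow, jacobiSum_ringHomComp,
      jacobiSum_mulChar_sq_eq hp hg hθ hAB hA hB, GaussianInt.toComplex_def']
    push_cast
    ring
  have hprod := gaussSum_sq_mul_gaussSum_sq_of_pow_four_eq_one
    (mulChar_powers_ne_one_of_sq_apply_eq_neg_one hχ_sq).1
    (mulChar_pow_four_eq_one hg (by rw [hχ, Complex.I_pow_four])) (ZMod.isPrimitive_stdAddChar p)
  rw [mulChar_sq_eq_quadraticChar hg hchar hχ_sq,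
    gaussSum_quadraticChar_stdAddChar_of_mod_eight_eq_five hp,
    ← mulChar_sq_eq_quadraticChar hg hchar hχ_sq, hjacobi,
    mulChar_apply_neg_one_eq_neg_one hg hcard hχ_sq, ZMod.card] at hprod
  refine mul_right_cancel₀ (ofReal_sqrt_natCast_ne_zero (NeZero.ne p)) ?_
  linear_combination hprod - (A + B * Complex.I) * ofReal_sqrt_natCast_sq p

end GaussSum

section GaussPeriods

lemma sum_range_pow_mul_eq_sum_range_pow_mul_sum_filter_mod {R : Type*} [Semiring R] {w : R}
    {n : ℕ} (hn : n ≠ 0) (hw : w ^ n = 1) (N : ℕ) (f : ℕ → R) :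
    ∑ k ∈ range N, w ^ k * f k = ∑ j ∈ range n, w ^ j * ∑ k ∈ range N with k % n = j, f k := by
  rw [← sum_fiberwise_of_maps_to (t := range n) (g := (· % n))
    fun k _ ↦ mem_range.2 (Nat.mod_lt k (Nat.pos_of_ne_zero hn))]
  refine sum_congr rfl fun j _ ↦ ?_
  rw [mul_sum]
  refine sum_congr rfl fun k hk ↦ ?_
  rw [← (mem_filter.1 hk).2, ← pow_eq_pow_mod k hw]

/-- The `j`-th of the `n` Gauss periods modulo `p` attached to the primitive root `g`: the sum of
`exp (2πi / p) ^ (g ^ k)` over the exponents `k < p - 1` with `k ≡ j [MOD n]`, where `j < n`. -/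
noncomputable def gaussPeriod (p n g j : ℕ) : ℂ :=
  ∑ k ∈ range (p - 1) with k % n = j, Complex.exp (2 * Real.pi * Complex.I / p) ^ g ^ k

variable {p : ℕ} [Fact p.Prime] {g : ℕ} {χ : MulChar (ZMod p) ℂ}

lemma gaussSum_stdAddChar_eq_sum_gaussPeriod
    (hg : IsPrimitiveRoot (g : ZMod p) (Fintype.card (ZMod p) - 1)) {n : ℕ} (hn : n ≠ 0)
    (hχ : χ g ^ n = 1) :
    gaussSum χ ZMod.stdAddChar = ∑ j ∈ range n, χ g ^ j * gaussPeriod p n g j := by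
  simp only [gaussPeriod]
  rw [gaussSum, sum_univ_eq_sum_range_pow hg (by rw [MulChar.map_zero, zero_mul]), ZMod.card,
    ← sum_range_pow_mul_eq_sum_range_pow_mul_sum_filter_mod hn hχ]
  refine sum_congr rfl fun k _ ↦ ?_
  rw [map_pow, ← Nat.cast_pow, stdAddChar_natCast]

lemma gaussSum_stdAddChar_eq_gaussPeriod_four
    (hg : IsPrimitiveRoot (g : ZMod p) (Fintype.card (ZMod p) - 1)) (hχ : χ g ^ 2 = -1) :
    gaussSum χ ZMod.stdAddChar = (gaussPeriod p 4 g 0 - gaussPeriod p 4 g 2) +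
      χ g * (gaussPeriod p 4 g 1 - gaussPeriod p 4 g 3) := by
  rw [gaussSum_stdAddChar_eq_sum_gaussPeriod hg four_ne_zero
    (by linear_combination (χ g ^ 2 - 1) * hχ)]
  simp only [sum_range_succ, sum_range_zero]
  linear_combination (gaussPeriod p 4 g 2 + χ g * gaussPeriod p 4 g 3) * hχ

lemma sq_and_sq_and_mul_eq_of_add_I_mul_sq_eq {x y r A B : ℂ} (hr : r ≠ 0)
    (hAB : A ^ 2 + B ^ 2 = r ^ 2)
    (hnorm : (x + Complex.I * y) * (x - Complex.I * y) = -r ^ 2)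
    (hsq : (x + Complex.I * y) ^ 2 = r * (A + B * Complex.I)) :
    x ^ 2 = (A * r - r ^ 2) / 2 ∧ y ^ 2 = -((A * r + r ^ 2) / 2) ∧ x * y = B * r / 2 := by
  have hne : x + Complex.I * y ≠ 0 := by
    rintro h
    rw [h, zero_mul, zero_eq_neg, sq_eq_zero_iff] at hnorm
    exact hr hnorm
  have hconj : (x - Complex.I * y) ^ 2 = r * (A - B * Complex.I) := by
    refine mul_left_cancel₀ (pow_ne_zero 2 hne) ?_
    linear_combination
      ((x + Complex.I * y) * (x - Complex.I * y) - r ^ 2) * hnorm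
        - r * (A - B * Complex.I) * hsq - r ^ 2 * hAB + r ^ 2 * B ^ 2 * Complex.I_sq
  refine ⟨?_, ?_, ?_⟩
  · linear_combination (hsq + hconj + 2 * hnorm) / 4
  · linear_combination y ^ 2 * Complex.I_sq - (hsq + hconj - 2 * hnorm) / 4
  · linear_combination (x * y - B * r / 2) * Complex.I_sq - Complex.I / 4 * (hsq - hconj)

end GaussPeriods

theorem stmt_16 (p : ℕ) (hp : p.Prime) (hp8 : p % 8 = 5)
    (ι : ℕ) (hι : IsPrimitiveRoot ((ι : ℕ) : ZMod p) (p - 1))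
    (A B : ℤ) (hAB : (p : ℤ) = A ^ 2 + B ^ 2)
    (hA : A ≡ -1 [ZMOD 4])
    (hB : B ≡ A * (ι : ℤ) ^ ((p - 1) / 4) [ZMOD (p : ℤ)])
    (ζ : ℂ) (hζ : ζ = Complex.exp (2 * Real.pi * Complex.I / p))
    (S : ℕ → ℂ)
    (hS : ∀ j, S j = ∑ k ∈ (Finset.range (p - 1)).filter (fun k => k % 4 = j),
      ζ ^ (ι ^ k)) :
    (S 0 - S 2) ^ 2 = ((A : ℂ) * Real.sqrt p - (p : ℂ)) / 2 ∧
    (S 1 - S 3) ^ 2 = -(((A : ℂ) * Real.sqrt p + (p : ℂ)) / 2) ∧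
    (S 0 - S 2) * (S 1 - S 3) = (B : ℂ) * Real.sqrt p / 2 := by
  have : Fact p.Prime := ⟨hp⟩
  obtain rfl : S = gaussPeriod p 4 ι := funext fun j ↦ by rw [hS, hζ]; rfl
  have hg : IsPrimitiveRoot (ι : ZMod p) (Fintype.card (ZMod p) - 1) := by rwa [ZMod.card]
  have hB_mod : (B : ZMod p) = A * (ι : ZMod p) ^ ((p - 1) / 4) := by
    exact_mod_cast (ZMod.intCast_eq_intCast_iff _ _ p).2 hB
  have hAB_sqrt : (A : ℂ) ^ 2 + (B : ℂ) ^ 2 = (√(p : ℝ) : ℂ) ^ 2 := by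
    rw [ofReal_sqrt_natCast_sq]
    exact_mod_cast hAB.symm
  obtain ⟨χ, hχ⟩ : ∃ χ : MulChar (ZMod p) ℂ, χ ι = Complex.I := exists_mulChar_apply_eq hg (by
    rw [ZMod.card, show p - 1 = 4 * ((p - 1) / 4) by omega, pow_mul, Complex.I_pow_four, one_pow])
  have hχ_sq : χ ι ^ 2 = -1 := by rw [hχ, Complex.I_sq]
  have hχ_inv : χ⁻¹ ι = -Complex.I := by rw [MulChar.inv_apply_eq_inv', hχ, Complex.inv_I]
  have hsq := gaussSum_sq_eq_of_apply_eq_I hp8 hg hχ hAB.symm hA hB_mod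
  have hnorm := gaussSum_mul_gaussSum_inv (mulChar_powers_ne_one_of_sq_apply_eq_neg_one hχ_sq).1
    (ZMod.isPrimitive_stdAddChar p)
  rw [mulChar_apply_neg_one_eq_neg_one hg (by rwa [ZMod.card]) hχ_sq, ZMod.card,
    gaussSum_stdAddChar_eq_gaussPeriod_four (χ := χ⁻¹) hg (by rw [hχ_inv, neg_sq, Complex.I_sq]),
    hχ_inv, neg_mul, ← sub_eq_add_neg, neg_one_mul] at hnorm
  rw [gaussSum_stdAddChar_eq_gaussPeriod_four hg hχ_sq, hχ] at hsq hnorm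
  rw [← ofReal_sqrt_natCast_sq p] at hnorm ⊢
  exact sq_and_sq_and_mul_eq_of_add_I_mul_sq_eq (ofReal_sqrt_natCast_ne_zero hp.ne_zero)
    hAB_sqrt hnorm hsq
end
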